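/- arXiv:2406.16287 — 4 statements merged into one kernel-verified Lean document; each statement's English description precedes it below -/
import Mathlib

section
/- For every integer k ≥ 0, the quantity c_k := (∫₁³ L_k(x)² dx) / (∫₋₁¹ L_k(x)² dx) satisfies 1 ≤ c_k < 2^{2k−1}·3^{2k+1}; equivalently, ∫₋₁¹ L_k(x)² dx ≤ ∫₁³ L_k(x)² dx < 2^{2k−1}·3^{2k+1}·(2/(2k+1)). -/
open MeasureTheory intervalIntegral

/-- The degree-`k` Legendre polynomial, via Rodrigues' formula. -/
noncomputable def legendre (k : ℕ) (x : ℝ) : ℝ :=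
  (1 / ((2 : ℝ) ^ k * (Nat.factorial k : ℝ))) *
    iteratedDeriv k (fun y : ℝ => (y ^ 2 - 1) ^ k) x

open Polynomial in
/-- The Legendre polynomial of degree `k` as an element of `ℝ[X]`. -/
noncomputable def legendrePoly (k : ℕ) : ℝ[X] :=
  C (1 / ((2 : ℝ) ^ k * (Nat.factorial k : ℝ))) * derivative^[k] ((X ^ 2 - 1) ^ k)

open Polynomial in
theorem Polynomial.iteratedDeriv_eval (p : ℝ[X]) (n : ℕ) :
    iteratedDeriv n (fun x => p.eval x) = fun x => (derivative^[n] p).eval x := by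
  induction n with
  | zero => simp
  | succ n ih =>
    rw [iteratedDeriv_succ, ih]
    funext x
    rw [Polynomial.deriv, Function.iterate_succ_apply']

open Polynomial in
theorem legendre_eq_eval (k : ℕ) (x : ℝ) : legendre k x = (legendrePoly k).eval x := by
  have h : (fun y : ℝ => (y ^ 2 - 1) ^ k) = fun y => ((X ^ 2 - 1 : ℝ[X]) ^ k).eval y := by
    funext y
    simp
  rw [legendre, h, Polynomial.iteratedDeriv_eval, legendrePoly, eval_mul, eval_C]

open Polynomial in
/-- The expansion of the Legendre polynomial obtained from Rodrigues' formula and Leibniz' rule. -/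
theorem legendre_eq_sum (k : ℕ) (x : ℝ) :
    legendre k x = ∑ i ∈ Finset.range (k + 1),
      (k.choose i : ℝ) ^ 2 * (((x - 1) / 2) ^ i * ((x + 1) / 2) ^ (k - i)) := by
  have hfac : (X ^ 2 - 1 : ℝ[X]) ^ k = (X - C 1) ^ k * (X + C 1) ^ k := by
    rw [← mul_pow, C_1]
    ring
  rw [legendre_eq_eval, legendrePoly, hfac, iterate_derivative_mul, eval_mul, eval_C,
    eval_finsetSum, Finset.mul_sum]
  refine Finset.sum_congr rfl fun i hi => ?_
  have hik : i ≤ k := Finset.mem_range_succ_iff.mp hi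
  rw [iterate_derivative_X_sub_pow, iterate_derivative_X_add_pow, Nat.sub_sub_self hik,
    Nat.descFactorial_eq_factorial_mul_choose, Nat.descFactorial_eq_factorial_mul_choose,
    Nat.choose_symm hik]
  simp only [eval_natCast, eval_mul, eval_pow, eval_sub, eval_add, eval_X, eval_C, nsmul_eq_mul,
    Nat.cast_mul, div_pow]
  have hchoose : (k.choose i : ℝ) * i.factorial * (k - i).factorial = k.factorial := by
    exact_mod_cast Nat.choose_mul_factorial_mul_factorial hik
  have htwo : (2 : ℝ) ^ k = 2 ^ i * 2 ^ (k - i) := by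
    rw [← pow_add, Nat.add_sub_cancel' hik]
  have hk : (k.factorial : ℝ) ≠ 0 := by positivity
  rw [htwo]
  field_simp
  rw [← hchoose]
  ring

theorem legendre_one (k : ℕ) : legendre k 1 = 1 := by
  rw [legendre_eq_sum, Finset.sum_eq_single 0]
  · norm_num
  · intro i _ hi
    simp [hi]
  · simp

theorem legendre_neg_one (k : ℕ) : legendre k (-1) = (-1) ^ k := by
  rw [legendre_eq_sum, Finset.sum_eq_single k]
  · norm_num
  · intro i hi hik
    have : k - i ≠ 0 := by
      have := Finset.mem_range_succ_iff.mp hi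
      omega
    simp [this]
  · simp

theorem one_le_legendre (k : ℕ) {x : ℝ} (hx : 1 ≤ x) : 1 ≤ legendre k x := by
  have h₁ : 0 ≤ (x - 1) / 2 := by linarith
  have h₂ : 1 ≤ (x + 1) / 2 := by linarith
  rw [legendre_eq_sum]
  calc (1 : ℝ) ≤ ((x + 1) / 2) ^ k := one_le_pow₀ h₂
    _ = (k.choose 0 : ℝ) ^ 2 * (((x - 1) / 2) ^ 0 * ((x + 1) / 2) ^ (k - 0)) := by simp
    _ ≤ _ := Finset.single_le_sum
      (f := fun i => (k.choose i : ℝ) ^ 2 * (((x - 1) / 2) ^ i * ((x + 1) / 2) ^ (k - i)))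
      (fun i _ => by positivity) (by simp)

theorem legendre_le_two_mul_pow (k : ℕ) {x : ℝ} (hx : 1 ≤ x) : legendre k x ≤ (2 * x) ^ k := by
  have h₁ : 0 ≤ (x - 1) / 2 := by linarith
  have h₂ : 0 ≤ (x + 1) / 2 := by linarith
  have hsum : x = (x - 1) / 2 + (x + 1) / 2 := by ring
  have hpow : x ^ k = ∑ i ∈ Finset.range (k + 1),
      ((x - 1) / 2) ^ i * ((x + 1) / 2) ^ (k - i) * (k.choose i : ℝ) := by
    rw [← add_pow, ← hsum]
  rw [legendre_eq_sum, mul_pow, hpow, Finset.mul_sum]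
  refine Finset.sum_le_sum fun i _ => ?_
  have hchoose : (k.choose i : ℝ) ≤ 2 ^ k := by exact_mod_cast Nat.choose_le_two_pow k i
  calc (k.choose i : ℝ) ^ 2 * (((x - 1) / 2) ^ i * ((x + 1) / 2) ^ (k - i))
      = k.choose i * (((x - 1) / 2) ^ i * ((x + 1) / 2) ^ (k - i) * k.choose i) := by ring
    _ ≤ _ := by gcongr

open Polynomial in
theorem iterate_derivative_X_sq_sub_one_pow_ode (k n : ℕ) :
    (X ^ 2 - 1 : ℝ[X]) * derivative^[n + 2] ((X ^ 2 - 1) ^ k)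
      + 2 * ((n : ℝ[X]) + 1 - (k : ℝ[X])) * X * derivative^[n + 1] ((X ^ 2 - 1) ^ k)
      + ((n : ℝ[X]) + 1) * ((n : ℝ[X]) - 2 * (k : ℝ[X])) * derivative^[n] ((X ^ 2 - 1) ^ k) = 0 := by
  induction n with
  | zero =>
    have h : (X ^ 2 - 1 : ℝ[X]) * derivative ((X ^ 2 - 1) ^ k)
        - 2 * (k : ℝ[X]) * X * (X ^ 2 - 1) ^ k = 0 := by
      cases k with
      | zero => simp
      | succ m =>
        simp only [derivative_pow, derivative_sub, derivative_X, derivative_one, C_eq_natCast]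
        simp only [Nat.add_sub_cancel]
        push_cast
        ring
    have h' := congrArg derivative h
    simp only [derivative_sub, derivative_mul, derivative_X_sq, derivative_one,
      derivative_X, derivative_natCast, derivative_ofNat, derivative_zero, C_ofNat] at h'
    simp only [Function.iterate_succ_apply', Function.iterate_zero_apply]
    push_cast
    linear_combination h'
  | succ n ih =>
    have h' := congrArg derivative ih
    simp only [derivative_add, derivative_sub, derivative_mul, derivative_X_sq, derivative_one,
      derivative_X, derivative_natCast, derivative_ofNat, derivative_zero, C_ofNat,
      ← Function.iterate_succ_apply' (f := derivative)] at h'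
    push_cast
    linear_combination h'

open Polynomial in
/-- Legendre's differential equation. -/
theorem legendrePoly_ode (k : ℕ) :
    (X ^ 2 - 1) * derivative (derivative (legendrePoly k)) + 2 * X * derivative (legendrePoly k)
      = C ((k : ℝ) * (k + 1)) * legendrePoly k := by
  have h := iterate_derivative_X_sq_sub_one_pow_ode k k
  simp only [Function.iterate_succ_apply'] at h
  simp only [legendrePoly, derivative_C_mul, C_mul, C_add, C_1, C_eq_natCast]
  linear_combination C (1 / ((2 : ℝ) ^ k * (Nat.factorial k : ℝ))) * h

open Polynomial in
/-- An energy estimate for polynomial solutions of Legendre's differential equation. -/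
theorem Polynomial.integral_sq_le_of_ode {p : ℝ[X]} {N : ℝ} (hN : 0 < N)
    (hp : (X ^ 2 - 1) * derivative (derivative p) + 2 * X * derivative p = C N * p) :
    ∫ x in (-1 : ℝ)..1, p.eval x ^ 2 ≤ p.eval 1 ^ 2 + p.eval (-1) ^ 2 := by
  let F : ℝ[X] := X * p ^ 2 - C N⁻¹ * (X * (X ^ 2 - 1) * derivative p ^ 2)
  have hCN : (C N⁻¹ * C N : ℝ[X]) = 1 := by
    rw [← C_mul, inv_mul_cancel₀ hN.ne', C_1]
  have hF : derivative F = p ^ 2 + C N⁻¹ * ((X ^ 2 + 1) * derivative p ^ 2) := by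
    simp only [F, derivative_sub, derivative_mul, derivative_pow, derivative_X, derivative_one,
      derivative_C, C_eq_natCast]
    push_cast
    linear_combination (-2 * C N⁻¹ * X * derivative p) * hp - 2 * X * p * derivative p * hCN
  have hint : ∫ x in (-1 : ℝ)..1, (derivative F).eval x = F.eval 1 - F.eval (-1) :=
    integral_eq_sub_of_hasDerivAt (fun x _ => F.hasDerivAt x)
      ((derivative F).continuous.intervalIntegrable _ _)
  have hends : F.eval 1 - F.eval (-1) = p.eval 1 ^ 2 + p.eval (-1) ^ 2 := by
    simp [F]
  rw [← hends, ← hint]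
  refine integral_mono_on (by norm_num) ((p.continuous.pow 2).intervalIntegrable _ _)
    ((derivative F).continuous.intervalIntegrable _ _) fun x _ => ?_
  rw [hF]
  simp only [eval_add, eval_mul, eval_pow, eval_C, eval_X, eval_one]
  have : 0 ≤ N⁻¹ * ((x ^ 2 + 1) * (derivative p).eval x ^ 2) := by positivity
  linarith

theorem continuous_legendre (k : ℕ) : Continuous (legendre k) := by
  rw [funext (legendre_eq_eval k)]
  exact (legendrePoly k).continuous

theorem integral_legendre_sq_le_two (k : ℕ) : ∫ x in (-1 : ℝ)..1, legendre k x ^ 2 ≤ 2 := by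
  rcases Nat.eq_zero_or_pos k with rfl | hk
  · norm_num [legendre]
  · have h := Polynomial.integral_sq_le_of_ode (by positivity) (legendrePoly_ode k)
    simp only [← legendre_eq_eval, legendre_one, legendre_neg_one] at h
    rw [← pow_mul, mul_comm, pow_mul] at h
    norm_num at h
    exact h

/-- Lemma 3.2: `1 ≤ c_k < 2^(2k-1) 3^(2k+1)` where
`c_k = (∫₁³ L_k² dx) / (∫₋₁¹ L_k² dx)`; equivalently (using
`∫₋₁¹ L_k² dx = 2/(2k+1)`),
`∫₋₁¹ L_k² dx ≤ ∫₁³ L_k² dx < 2^(2k-1) 3^(2k+1) (2/(2k+1))`. -/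
theorem eset_lemma32 (k : ℕ) :
    (∫ x in (-1 : ℝ)..1, (legendre k x) ^ 2) ≤ (∫ x in (1 : ℝ)..3, (legendre k x) ^ 2) ∧
    (∫ x in (1 : ℝ)..3, (legendre k x) ^ 2) <
      (2 : ℝ) ^ (2 * (k : ℤ) - 1) * (3 : ℝ) ^ (2 * (k : ℤ) + 1) *
        (2 / (2 * (k : ℝ) + 1)) := by
  have hint : IntervalIntegrable (fun x => legendre k x ^ 2) volume 1 3 :=
    ((continuous_legendre k).pow 2).intervalIntegrable _ _
  constructor
  · refine (integral_legendre_sq_le_two k).trans ?_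
    calc (2 : ℝ) = ∫ _ in (1 : ℝ)..3, (1 : ℝ) := by norm_num
      _ ≤ _ := integral_mono_on (by norm_num) (by simp) hint fun x hx =>
        one_le_pow₀ (one_le_legendre k hx.1)
  · calc ∫ x in (1 : ℝ)..3, legendre k x ^ 2
        ≤ ∫ x in (1 : ℝ)..3, 2 ^ (2 * k) * x ^ (2 * k) := by
          refine integral_mono_on (by norm_num) hint
            (Continuous.intervalIntegrable (by fun_prop) _ _) fun x hx => ?_
          rw [← mul_pow, mul_comm 2 k, pow_mul]
          exact pow_le_pow_left₀ (zero_le_one.trans (one_le_legendre k hx.1))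
            (legendre_le_two_mul_pow k hx.1) 2
      _ = 2 ^ (2 * k) * ((3 ^ (2 * k + 1) - 1) / (2 * k + 1)) := by
          rw [intervalIntegral.integral_const_mul, integral_pow]
          simp
      _ < 2 ^ (2 * k) * (3 ^ (2 * k + 1) / (2 * k + 1)) := by
          gcongr
          linarith
      _ = _ := by
          rw [zpow_sub₀ two_ne_zero]
          norm_cast
          push_cast
          ring
end

section
/- Fix integers M ≥ 1, N ≥ 1, reals ε > 0 and a < b, a continuous function g : [−1,1] × [a,b] → ℝ, and a real polynomial u₀ of degree at most M with u₀(−1) = u₀(1) = 0. Then there exists exactly one h ∈ V_{M,N} with h(x,a) = u₀(x) for all x ∈ [−1,1] such that ∫_a^b ∫₋₁¹ [∂_t h·w + ε ∂_x h·∂_x w + g·w] dx dt = 0 for every w ∈ W_{M,N−1}. -/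
open MeasureTheory intervalIntegral

/-- `h(x,t)` is a real polynomial function of degree at most `M` in `x` and
at most `N` in `t`. -/
def IsPolyMN (M N : ℕ) (h : ℝ → ℝ → ℝ) : Prop :=
  ∃ c : Fin (M + 1) → Fin (N + 1) → ℝ,
    ∀ x t : ℝ, h x t = ∑ i : Fin (M + 1), ∑ j : Fin (N + 1),
      c i j * x ^ (i : ℕ) * t ^ (j : ℕ)

/-- The trial space `V_{M,N}`: polynomial functions of degree at most `M` in
`x` and at most `N` in `t`, vanishing at `x = ±1`. -/
def MemV (M N : ℕ) (h : ℝ → ℝ → ℝ) : Prop :=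
  IsPolyMN M N h ∧ ∀ t : ℝ, h (-1) t = 0 ∧ h 1 t = 0

/-- The test space `W_{M,N−1}`: polynomial functions of degree at most `M` in
`x` and at most `N−1` in `t`, vanishing at `x = ±1`. -/
def MemW (M N : ℕ) (w : ℝ → ℝ → ℝ) : Prop :=
  IsPolyMN M (N - 1) w ∧ ∀ t : ℝ, w (-1) t = 0 ∧ w 1 t = 0

/-- Partial derivative in time. -/
noncomputable def ptd (h : ℝ → ℝ → ℝ) (x t : ℝ) : ℝ := deriv (fun s => h x s) t

/-- Partial derivative in space. -/
noncomputable def pxd (h : ℝ → ℝ → ℝ) (x t : ℝ) : ℝ := deriv (fun y => h y t) x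

section PolynomialFunctions

variable {M N : ℕ} {h k : ℝ → ℝ → ℝ}

theorem IsPolyMN.add (hh : IsPolyMN M N h) (hk : IsPolyMN M N k) : IsPolyMN M N (h + k) := by
  obtain ⟨c, hc⟩ := hh
  obtain ⟨d, hd⟩ := hk
  refine ⟨c + d, fun x t => ?_⟩
  simp only [Pi.add_apply, hc, hd, add_mul, Finset.sum_add_distrib]

theorem IsPolyMN.smul (r : ℝ) (hh : IsPolyMN M N h) : IsPolyMN M N (r • h) := by
  obtain ⟨c, hc⟩ := hh
  refine ⟨r • c, fun x t => ?_⟩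
  simp only [Pi.smul_apply, smul_eq_mul, hc, Finset.mul_sum, mul_assoc]

theorem isPolyMN_zero : IsPolyMN M N 0 := ⟨0, by simp⟩

theorem IsPolyMN.succ (hh : IsPolyMN M N h) : IsPolyMN M (N + 1) h := by
  obtain ⟨c, hc⟩ := hh
  refine ⟨fun i => Fin.snoc (c i) 0, fun x t => ?_⟩
  simp [hc, Fin.sum_univ_castSucc (n := N + 1)]

theorem IsPolyMN.time_mul (hh : IsPolyMN M N h) : IsPolyMN M (N + 1) (fun x t => t * h x t) := by
  obtain ⟨c, hc⟩ := hh
  refine ⟨fun i => Fin.cons 0 (c i), fun x t => ?_⟩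
  simp only [hc, Fin.sum_univ_succ (n := N + 1), Fin.cons_zero, Fin.cons_succ, Fin.val_succ,
    zero_mul, zero_add, Finset.mul_sum]
  refine Finset.sum_congr rfl fun i _ => Finset.sum_congr rfl fun j _ => ?_
  ring

theorem isPolyMN_of_polynomial (u : Polynomial ℝ) (hu : u.natDegree ≤ M) :
    IsPolyMN M N (fun x _ => u.eval x) := by
  refine ⟨fun i => Fin.cons (u.coeff i) 0, fun x t => ?_⟩
  simp only [Fin.sum_univ_succ (n := N), Fin.cons_zero, Fin.cons_succ]
  simp [Polynomial.eval_eq_sum_range' (Nat.lt_succ_of_le hu), Finset.sum_range]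

theorem IsPolyMN.continuous (hh : IsPolyMN M N h) : Continuous fun p : ℝ × ℝ => h p.1 p.2 := by
  obtain ⟨c, hc⟩ := hh
  simp only [hc]
  fun_prop

theorem IsPolyMN.exists_polynomial_space (hh : IsPolyMN M N h) (t : ℝ) :
    ∃ P : Polynomial ℝ, ∀ x, h x t = P.eval x := by
  obtain ⟨c, hc⟩ := hh
  refine ⟨∑ i : Fin (M + 1), ∑ j : Fin (N + 1),
    Polynomial.C (c i j * t ^ (j : ℕ)) * Polynomial.X ^ (i : ℕ), fun x => ?_⟩
  simp only [hc, Polynomial.eval_finsetSum, Polynomial.eval_mul, Polynomial.eval_C,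
    Polynomial.eval_pow, Polynomial.eval_X]
  refine Finset.sum_congr rfl fun i _ => Finset.sum_congr rfl fun j _ => ?_
  ring

theorem IsPolyMN.exists_polynomial_time (hh : IsPolyMN M N h) (x : ℝ) :
    ∃ P : Polynomial ℝ, ∀ t, h x t = P.eval t := by
  obtain ⟨c, hc⟩ := hh
  refine ⟨∑ i : Fin (M + 1), ∑ j : Fin (N + 1),
    Polynomial.C (c i j * x ^ (i : ℕ)) * Polynomial.X ^ (j : ℕ), fun t => ?_⟩
  simp only [hc, Polynomial.eval_finsetSum, Polynomial.eval_mul, Polynomial.eval_C,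
    Polynomial.eval_pow, Polynomial.eval_X]

theorem Polynomial.eval_eq_zero_of_Icc {P : Polynomial ℝ} {a b : ℝ} (hab : a < b)
    (hP : ∀ x ∈ Set.Icc a b, P.eval x = 0) (x : ℝ) : P.eval x = 0 := by
  have : P = 0 := Polynomial.eq_zero_of_infinite_isRoot P
    ((Set.Icc_infinite hab).mono fun x hx => hP x hx)
  simp [this]

theorem IsPolyMN.eq_zero_of_space (hh : IsPolyMN M N h) {t : ℝ}
    (h0 : ∀ x ∈ Set.Icc (-1 : ℝ) 1, h x t = 0) (x : ℝ) : h x t = 0 := by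
  obtain ⟨P, hP⟩ := hh.exists_polynomial_space t
  rw [hP]
  exact Polynomial.eval_eq_zero_of_Icc (a := -1) (b := 1) (by norm_num) (fun y hy => by rw [← hP, h0 y hy])
    x

theorem IsPolyMN.eq_zero_of_time (hh : IsPolyMN M N h) {x a b : ℝ} (hab : a < b)
    (h0 : ∀ t ∈ Set.Icc a b, h x t = 0) (t : ℝ) : h x t = 0 := by
  obtain ⟨P, hP⟩ := hh.exists_polynomial_time x
  rw [hP]
  exact Polynomial.eval_eq_zero_of_Icc hab (fun y hy => by rw [← hP, h0 y hy]) t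

theorem hasDerivAt_sum_time (c : Fin (M + 1) → Fin (N + 1) → ℝ) (A : Fin (M + 1) → ℝ) (t : ℝ) :
    HasDerivAt (fun s => ∑ i, ∑ j, c i j * A i * s ^ (j : ℕ))
      (∑ i, ∑ j, c i j * A i * ((j : ℕ) * t ^ ((j : ℕ) - 1))) t :=
  HasDerivAt.fun_sum fun _ _ => HasDerivAt.fun_sum fun _ _ => (hasDerivAt_pow _ t).const_mul _

theorem hasDerivAt_sum_space (c : Fin (M + 1) → Fin (N + 1) → ℝ) (B : Fin (N + 1) → ℝ) (x : ℝ) :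
    HasDerivAt (fun y => ∑ i, ∑ j, c i j * y ^ (i : ℕ) * B j)
      (∑ i, ∑ j, c i j * ((i : ℕ) * x ^ ((i : ℕ) - 1)) * B j) x :=
  HasDerivAt.fun_sum fun _ _ => HasDerivAt.fun_sum fun _ _ =>
    ((hasDerivAt_pow _ x).const_mul _).mul_const _

theorem IsPolyMN.hasDerivAt_ptd (hh : IsPolyMN M N h) (x t : ℝ) :
    HasDerivAt (fun s => h x s) (ptd h x t) t := by
  obtain ⟨c, hc⟩ := hh
  refine DifferentiableAt.hasDerivAt ?_
  simp only [hc]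
  exact (hasDerivAt_sum_time c (fun i => x ^ (i : ℕ)) t).differentiableAt

theorem IsPolyMN.hasDerivAt_pxd (hh : IsPolyMN M N h) (x t : ℝ) :
    HasDerivAt (fun y => h y t) (pxd h x t) x := by
  obtain ⟨c, hc⟩ := hh
  refine DifferentiableAt.hasDerivAt ?_
  simp only [hc]
  exact (hasDerivAt_sum_space c (fun j => t ^ (j : ℕ)) x).differentiableAt

theorem pxd_eq_sum {c : Fin (M + 1) → Fin (N + 1) → ℝ}
    (hc : ∀ x t : ℝ, h x t = ∑ i, ∑ j, c i j * x ^ (i : ℕ) * t ^ (j : ℕ)) (x t : ℝ) :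
    pxd h x t = ∑ i, ∑ j, c i j * ((i : ℕ) * x ^ ((i : ℕ) - 1)) * t ^ (j : ℕ) := by
  simp only [pxd, hc]
  exact (hasDerivAt_sum_space c (fun j => t ^ (j : ℕ)) x).deriv

theorem ptd_eq_sum {c : Fin (M + 1) → Fin (N + 1) → ℝ}
    (hc : ∀ x t : ℝ, h x t = ∑ i, ∑ j, c i j * x ^ (i : ℕ) * t ^ (j : ℕ)) (x t : ℝ) :
    ptd h x t = ∑ i, ∑ j, c i j * x ^ (i : ℕ) * ((j : ℕ) * t ^ ((j : ℕ) - 1)) := by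
  simp only [ptd, hc]
  exact (hasDerivAt_sum_time c (fun i => x ^ (i : ℕ)) t).deriv

theorem IsPolyMN.continuous_pxd (hh : IsPolyMN M N h) :
    Continuous fun p : ℝ × ℝ => pxd h p.1 p.2 := by
  obtain ⟨c, hc⟩ := hh
  simp only [pxd_eq_sum hc]
  fun_prop

theorem IsPolyMN.continuous_ptd (hh : IsPolyMN M N h) :
    Continuous fun p : ℝ × ℝ => ptd h p.1 p.2 := by
  obtain ⟨c, hc⟩ := hh
  simp only [ptd_eq_sum hc]
  fun_prop

theorem IsPolyMN.ptd (hh : IsPolyMN M (N + 1) h) : IsPolyMN M N (ptd h) := by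
  obtain ⟨c, hc⟩ := hh
  refine ⟨fun i j => c i j.succ * ((j : ℕ) + 1), fun x t => ?_⟩
  simp only [ptd_eq_sum hc, Fin.sum_univ_succ (n := N + 1)]
  refine Finset.sum_congr rfl fun i _ => ?_
  simp only [Fin.val_zero, Nat.cast_zero, zero_mul, mul_zero, zero_add, Fin.val_succ,
    Nat.add_sub_cancel, Nat.cast_add, Nat.cast_one]
  refine Finset.sum_congr rfl fun j _ => ?_
  ring

theorem IsPolyMN.hasDerivAt_pxd_time (hh : IsPolyMN M N h) (x t : ℝ) :
    HasDerivAt (fun s => pxd h x s) (pxd (_root_.ptd h) x t) t := by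
  obtain ⟨c, hc⟩ := hh
  have : pxd (_root_.ptd h) x t =
      ∑ i, ∑ j, c i j * ((i : ℕ) * x ^ ((i : ℕ) - 1)) * ((j : ℕ) * t ^ ((j : ℕ) - 1)) := by
    simp only [pxd, ptd_eq_sum hc]
    exact (hasDerivAt_sum_space c _ x).deriv
  rw [this]
  simp only [pxd_eq_sum hc]
  exact hasDerivAt_sum_time c _ t

theorem IsPolyMN.ptd_add (hh : IsPolyMN M N h) (hk : IsPolyMN M N k) (x t : ℝ) :
    _root_.ptd (h + k) x t = _root_.ptd h x t + _root_.ptd k x t :=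
  ((hh.hasDerivAt_ptd x t).add (hk.hasDerivAt_ptd x t)).deriv

theorem IsPolyMN.pxd_add (hh : IsPolyMN M N h) (hk : IsPolyMN M N k) (x t : ℝ) :
    pxd (h + k) x t = pxd h x t + pxd k x t :=
  ((hh.hasDerivAt_pxd x t).add (hk.hasDerivAt_pxd x t)).deriv

theorem IsPolyMN.ptd_smul (r : ℝ) (hh : IsPolyMN M N h) (x t : ℝ) :
    _root_.ptd (r • h) x t = r * _root_.ptd h x t :=
  ((hh.hasDerivAt_ptd x t).const_mul r).deriv

theorem IsPolyMN.pxd_smul (r : ℝ) (hh : IsPolyMN M N h) (x t : ℝ) :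
    pxd (r • h) x t = r * pxd h x t :=
  ((hh.hasDerivAt_pxd x t).const_mul r).deriv

theorem MemV.ptd (hh : MemV M (N + 1) h) : MemV M N (ptd h) :=
  ⟨hh.1.ptd, fun t => by simp [_root_.ptd, hh.2]⟩

end PolynomialFunctions

section SpaceTimeIntegral

variable {a b : ℝ} {f g : ℝ → ℝ → ℝ}

/-- The integral over `[-1, 1] × [a, b]`, as an iterated integral. -/
noncomputable def slabIntegral (a b : ℝ) (f : ℝ → ℝ → ℝ) : ℝ :=
  ∫ t in a..b, ∫ x in (-1 : ℝ)..1, f x t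

theorem continuous_space_integral (hf : Continuous fun p : ℝ × ℝ => f p.1 p.2) :
    Continuous fun t => ∫ x in (-1 : ℝ)..1, f x t :=
  intervalIntegral.continuous_parametric_intervalIntegral_of_continuous'
    (f := fun t x => f x t) (hf.comp continuous_swap) _ _

theorem slabIntegral_add (hf : Continuous fun p : ℝ × ℝ => f p.1 p.2)
    (hg : Continuous fun p : ℝ × ℝ => g p.1 p.2) :
    slabIntegral a b (fun x t => f x t + g x t) = slabIntegral a b f + slabIntegral a b g := by
  unfold slabIntegral
  rw [← intervalIntegral.integral_add ((continuous_space_integral hf).intervalIntegrable _ _)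
    ((continuous_space_integral hg).intervalIntegrable _ _)]
  refine intervalIntegral.integral_congr fun t _ => ?_
  exact intervalIntegral.integral_add
    ((hf.comp (Continuous.prodMk_left t)).intervalIntegrable _ _)
    ((hg.comp (Continuous.prodMk_left t)).intervalIntegrable _ _)

theorem slabIntegral_const_mul (r : ℝ) (f : ℝ → ℝ → ℝ) :
    slabIntegral a b (fun x t => r * f x t) = r * slabIntegral a b f := by
  simp [slabIntegral]

theorem eq_zero_of_slabIntegral_nonpos (hab : a < b)
    (hf : Continuous fun p : ℝ × ℝ => f p.1 p.2) (hnonneg : ∀ x t, 0 ≤ f x t)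
    (hint : slabIntegral a b f ≤ 0) :
    ∀ x ∈ Set.Icc (-1 : ℝ) 1, ∀ t ∈ Set.Icc a b, f x t = 0 := by
  intro x hx t ht
  by_contra hne
  refine hint.not_gt (intervalIntegral.integral_pos hab
    (continuous_space_integral hf).continuousOn
    (fun s _ => intervalIntegral.integral_nonneg (by norm_num) fun y _ => hnonneg y s)
    ⟨t, ht, ?_⟩)
  exact intervalIntegral.integral_pos (by norm_num)
    (hf.comp (Continuous.prodMk_left t)).continuousOn (fun y _ => hnonneg y t)
    ⟨x, hx, (hnonneg x t).lt_of_ne' hne⟩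

end SpaceTimeIntegral

section Galerkin

variable {M N : ℕ} {ε a b : ℝ} {h k w v : ℝ → ℝ → ℝ}

/-- The space–time bilinear form of the heat operator `∂ₜ - ε ∂ₓₓ`. -/
noncomputable def heatForm (ε a b : ℝ) (h w : ℝ → ℝ → ℝ) : ℝ :=
  slabIntegral a b fun x t => ptd h x t * w x t + ε * pxd h x t * pxd w x t

theorem continuous_heatForm_integrand {N' : ℕ} (ε : ℝ) (hh : IsPolyMN M N h)
    (hw : IsPolyMN M N' w) :
    Continuous fun p : ℝ × ℝ =>
      ptd h p.1 p.2 * w p.1 p.2 + ε * pxd h p.1 p.2 * pxd w p.1 p.2 :=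
  (hh.continuous_ptd.mul hw.continuous).add
    ((continuous_const.mul hh.continuous_pxd).mul hw.continuous_pxd)

theorem heatForm_add_left {N' : ℕ} (hh : IsPolyMN M N h) (hk : IsPolyMN M N k)
    (hw : IsPolyMN M N' w) :
    heatForm ε a b (h + k) w = heatForm ε a b h w + heatForm ε a b k w := by
  unfold heatForm
  rw [← slabIntegral_add (continuous_heatForm_integrand ε hh hw)
    (continuous_heatForm_integrand ε hk hw)]
  congr! 3 with x t
  rw [hh.ptd_add hk, hh.pxd_add hk]
  ring

theorem heatForm_add_right {N' : ℕ} (hw : IsPolyMN M N w) (hh : IsPolyMN M N' h)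
    (hk : IsPolyMN M N' k) :
    heatForm ε a b w (h + k) = heatForm ε a b w h + heatForm ε a b w k := by
  unfold heatForm
  rw [← slabIntegral_add (continuous_heatForm_integrand ε hw hh)
    (continuous_heatForm_integrand ε hw hk)]
  congr! 3 with x t
  rw [hh.pxd_add hk, Pi.add_apply, Pi.add_apply]
  ring

theorem heatForm_smul_left (r : ℝ) (hh : IsPolyMN M N h) (w : ℝ → ℝ → ℝ) :
    heatForm ε a b (r • h) w = r * heatForm ε a b h w := by
  unfold heatForm
  rw [← slabIntegral_const_mul]
  congr! 3 with x t
  rw [hh.ptd_smul, hh.pxd_smul]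
  ring

theorem heatForm_smul_right (r : ℝ) (h : ℝ → ℝ → ℝ) (hw : IsPolyMN M N w) :
    heatForm ε a b h (r • w) = r * heatForm ε a b h w := by
  unfold heatForm
  rw [← slabIntegral_const_mul]
  congr! 3 with x t
  rw [hw.pxd_smul, Pi.smul_apply, Pi.smul_apply, smul_eq_mul]
  ring

theorem slabIntegral_pxd_mul_pxd_ptd_nonneg (hh : IsPolyMN M (N + 1) h)
    (h0 : ∀ x, h x a = 0) :
    0 ≤ slabIntegral a b fun x t => pxd h x t * pxd (ptd h) x t := by
  have hcont : Continuous fun p : ℝ × ℝ => pxd h p.1 p.2 * pxd (ptd h) p.1 p.2 :=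
    hh.continuous_pxd.mul hh.ptd.continuous_pxd
  have hswap : slabIntegral a b (fun x t => pxd h x t * pxd (ptd h) x t) =
      ∫ x in (-1 : ℝ)..1, ∫ t in a..b, pxd h x t * pxd (ptd h) x t :=
    intervalIntegral_intervalIntegral_swap (F := fun t x => pxd h x t * pxd (ptd h) x t)
      (((hcont.comp continuous_swap).continuousOn.integrableOn_compact
        (isCompact_uIcc.prod isCompact_uIcc)).mono_set
        (Set.prod_mono Set.uIoc_subset_uIcc Set.uIoc_subset_uIcc))
  rw [hswap]
  refine intervalIntegral.integral_nonneg (by norm_num) fun x _ => ?_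
  have hinit : pxd h x a = 0 := by simp [pxd, h0]
  have hderiv : ∀ t ∈ Set.uIcc a b, HasDerivAt (fun s => pxd h x s ^ 2 / 2)
      (pxd h x t * pxd (ptd h) x t) t := fun t _ => by
    refine (((hh.hasDerivAt_pxd_time x t).fun_pow 2).div_const 2).congr_deriv ?_
    push_cast
    ring
  rw [intervalIntegral.integral_eq_sub_of_hasDerivAt hderiv
    ((hcont.comp (Continuous.prodMk_right x)).intervalIntegrable _ _), hinit]
  norm_num
  positivity

/-- Coercivity: testing with `∂ₜh` shows that the homogeneous problem is only solved by zero. -/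
theorem eq_zero_of_heatForm_eq_zero (hε : 0 ≤ ε) (hab : a < b) (hh : MemV M (N + 1) h)
    (h0 : ∀ x ∈ Set.Icc (-1 : ℝ) 1, h x a = 0)
    (horth : ∀ w, MemV M N w → heatForm ε a b h w = 0) : h = 0 := by
  have hinit := hh.1.eq_zero_of_space h0
  have hpt := hh.1.ptd
  have hsplit : heatForm ε a b h (ptd h) = slabIntegral a b (fun x t => ptd h x t * ptd h x t) +
      ε * slabIntegral a b fun x t => pxd h x t * pxd (ptd h) x t := by
    rw [← slabIntegral_const_mul, ← slabIntegral_add (hpt.continuous.mul hpt.continuous)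
      (continuous_const.mul (hh.1.continuous_pxd.mul hpt.continuous_pxd))]
    simp only [heatForm, mul_assoc]
  have henergy := mul_nonneg hε (slabIntegral_pxd_mul_pxd_ptd_nonneg (b := b) hh.1 hinit)
  rw [horth _ hh.ptd] at hsplit
  have hzero := eq_zero_of_slabIntegral_nonpos hab (hpt.continuous.mul hpt.continuous)
    (fun x t => mul_self_nonneg (ptd h x t)) (by linarith)
  have hptd : ∀ x t, ptd h x t = 0 := fun x t =>
    hpt.eq_zero_of_space (fun y hy => hpt.eq_zero_of_time hab
      (fun s hs => mul_self_eq_zero.mp (hzero y hy s hs)) t) x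
  funext x t
  rw [is_const_of_deriv_eq_zero (f := fun s => h x s)
    (fun s => (hh.1.hasDerivAt_ptd x s).differentiableAt) (hptd x) t a]
  exact hinit x

/-- The space of functions satisfying `MemV M N`. -/
def trialSpace (M N : ℕ) : Submodule ℝ (ℝ → ℝ → ℝ) where
  carrier := {h | MemV M N h}
  add_mem' hh hk := ⟨hh.1.add hk.1, fun t => by simp [hh.2, hk.2]⟩
  zero_mem' := ⟨isPolyMN_zero, fun t => by simp⟩
  smul_mem' r _ hh := ⟨hh.1.smul r, fun t => by simp [hh.2]⟩

instance finiteDimensional_trialSpace (M N : ℕ) : FiniteDimensional ℝ (trialSpace M N) := by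
  let F : (Fin (M + 1) → Fin (N + 1) → ℝ) →ₗ[ℝ] ℝ → ℝ → ℝ :=
    { toFun := fun c x t => ∑ i, ∑ j, c i j * x ^ (i : ℕ) * t ^ (j : ℕ)
      map_add' := fun c d => by
        funext x t
        simp only [Pi.add_apply, add_mul, Finset.sum_add_distrib]
      map_smul' := fun r c => by
        funext x t
        simp only [Pi.smul_apply, smul_eq_mul, Finset.mul_sum, mul_assoc, RingHom.id_apply] }
  refine Submodule.finiteDimensional_of_le (S₂ := LinearMap.range F) fun h hh => ?_
  obtain ⟨c, hc⟩ := hh.1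
  exact ⟨c, funext fun x => funext fun t => (hc x t).symm⟩

/-- Multiplication by `t - a`, which makes a function vanish at the initial time `a`. -/
def mulTime (a : ℝ) : (ℝ → ℝ → ℝ) →ₗ[ℝ] ℝ → ℝ → ℝ where
  toFun v x t := (t - a) * v x t
  map_add' v w := by funext x t; simp [mul_add]
  map_smul' r v := by funext x t; simp [mul_left_comm]

theorem MemV.mulTime (a : ℝ) (hv : MemV M N v) : MemV M (N + 1) (mulTime a v) := by
  refine ⟨?_, fun t => by simp [_root_.mulTime, hv.2]⟩
  convert hv.1.time_mul.add (hv.1.succ.smul (-a)) using 1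
  funext x t
  simp [_root_.mulTime]
  ring

theorem eq_zero_of_mulTime_eq_zero (hv : IsPolyMN M N v) (h0 : mulTime a v = 0) : v = 0 := by
  funext x t
  refine hv.eq_zero_of_time (a := a + 1) (b := a + 2) (by linarith) (fun s hs => ?_) t
  have hs0 : (s - a) * v x s = 0 := congrFun (congrFun h0 x) s
  exact (mul_eq_zero.mp hs0).resolve_left (by linarith [hs.1])

/-- Every linear functional on the test space is represented by a trial function that vanishes
at the initial time. -/
theorem exists_heatForm_eq (hε : 0 ≤ ε) (hab : a < b) (L : Module.Dual ℝ (trialSpace M N)) :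
    ∃ h, MemV M (N + 1) h ∧ (∀ x, h x a = 0) ∧ ∀ w : trialSpace M N, heatForm ε a b h w = L w := by
  let T : trialSpace M N →ₗ[ℝ] Module.Dual ℝ (trialSpace M N) :=
    LinearMap.mk₂ ℝ (fun v w => heatForm ε a b (mulTime a v) w)
      (fun v v' w => by
        rw [Submodule.coe_add, map_add]
        exact heatForm_add_left (v.2.mulTime a).1 (v'.2.mulTime a).1 w.2.1)
      (fun r v w => by
        rw [Submodule.coe_smul, map_smul]
        exact heatForm_smul_left r (v.2.mulTime a).1 w)
      (fun v w w' => heatForm_add_right (v.2.mulTime a).1 w.2.1 w'.2.1)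
      (fun r v w => heatForm_smul_right r _ w.2.1)
  have hinj : Function.Injective T := by
    rw [injective_iff_map_eq_zero]
    intro v hv
    refine Subtype.ext (eq_zero_of_mulTime_eq_zero (a := a) v.2.1 ?_)
    refine eq_zero_of_heatForm_eq_zero hε hab (v.2.mulTime a) (fun x _ => by simp [mulTime])
      fun w hw => ?_
    exact LinearMap.congr_fun hv ⟨w, hw⟩
  obtain ⟨v, hv⟩ := (LinearMap.injective_iff_surjective_of_finrank_eq_finrank
    Subspace.dual_finrank_eq.symm).mp hinj L
  exact ⟨mulTime a v, v.2.mulTime a, fun x => by simp [mulTime], fun w => LinearMap.congr_fun hv w⟩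

/-- A continuous function on the slab has a continuous extension to the plane. -/
theorem exists_continuous_extension (hab : a ≤ b) {g : ℝ → ℝ → ℝ}
    (hg : ContinuousOn (fun p : ℝ × ℝ => g p.1 p.2) (Set.Icc (-1 : ℝ) 1 ×ˢ Set.Icc a b)) :
    ∃ G : ℝ → ℝ → ℝ, (Continuous fun p : ℝ × ℝ => G p.1 p.2) ∧
      ∀ x ∈ Set.Icc (-1 : ℝ) 1, ∀ t ∈ Set.Icc a b, G x t = g x t := by
  have h11 : (-1 : ℝ) ≤ 1 := by norm_num
  refine ⟨fun x t => g (Set.projIcc (-1) 1 h11 x) (Set.projIcc a b hab t), ?_, ?_⟩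
  · refine hg.comp_continuous (f := fun p : ℝ × ℝ =>
      ((Set.projIcc (-1) 1 h11 p.1 : ℝ), (Set.projIcc a b hab p.2 : ℝ))) ?_ fun p =>
        ⟨Subtype.coe_prop _, Subtype.coe_prop _⟩
    exact (continuous_subtype_val.comp (continuous_projIcc.comp continuous_fst)).prodMk
      (continuous_subtype_val.comp (continuous_projIcc.comp continuous_snd))
  · intro x hx t ht
    simp [Set.projIcc_of_mem h11 hx, Set.projIcc_of_mem hab ht]

theorem slabIntegral_galerkin {N' : ℕ} (hab : a ≤ b) {g G : ℝ → ℝ → ℝ}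
    (hG : Continuous fun p : ℝ × ℝ => G p.1 p.2)
    (hgG : ∀ x ∈ Set.Icc (-1 : ℝ) 1, ∀ t ∈ Set.Icc a b, G x t = g x t)
    (hh : IsPolyMN M N h) (hw : IsPolyMN M N' w) :
    (∫ t in a..b, ∫ x in (-1 : ℝ)..1,
      (ptd h x t * w x t + ε * pxd h x t * pxd w x t + g x t * w x t)) =
      heatForm ε a b h w + slabIntegral a b fun x t => G x t * w x t := by
  rw [heatForm, ← slabIntegral_add (continuous_heatForm_integrand ε hh hw) (hG.mul hw.continuous)]
  refine intervalIntegral.integral_congr fun t ht => intervalIntegral.integral_congr fun x hx => ?_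
  rw [Set.uIcc_of_le hab] at ht
  rw [Set.uIcc_of_le (by norm_num)] at hx
  simp only [hgG x hx t ht]

end Galerkin

/-- Well-posedness of the single-step linear space–time Galerkin problem
underlying the semi-implicit ESET scheme (the nonlinear term frozen into a
given continuous source `g`). -/
theorem eset_linear_step_wellposed (M N : ℕ) (hM : 1 ≤ M) (hN : 1 ≤ N)
    (ε : ℝ) (hε : 0 < ε) (a b : ℝ) (hab : a < b)
    (g : ℝ → ℝ → ℝ)
    (hg : ContinuousOn (fun p : ℝ × ℝ => g p.1 p.2)
      (Set.Icc (-1 : ℝ) 1 ×ˢ Set.Icc a b))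
    (u₀ : Polynomial ℝ) (hu₀deg : u₀.natDegree ≤ M)
    (hu₀m : u₀.eval (-1 : ℝ) = 0) (hu₀p : u₀.eval (1 : ℝ) = 0) :
    ∃! h : ℝ → ℝ → ℝ, MemV M N h ∧
      (∀ x ∈ Set.Icc (-1 : ℝ) 1, h x a = u₀.eval x) ∧
      ∀ w : ℝ → ℝ → ℝ, MemW M N w →
        (∫ t in a..b, ∫ x in (-1 : ℝ)..1,
          (ptd h x t * w x t + ε * pxd h x t * pxd w x t + g x t * w x t)) = 0 := by
  obtain ⟨N, rfl⟩ := Nat.exists_eq_add_of_le' hN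
  obtain ⟨G, hG, hgG⟩ := exists_continuous_extension hab.le hg
  have hform : ∀ {h w : ℝ → ℝ → ℝ}, MemV M (N + 1) h → MemV M N w → _ := fun hh hw =>
    slabIntegral_galerkin (ε := ε) hab.le hG hgG hh.1 hw.1
  have hu₀ : MemV M (N + 1) fun x _ => u₀.eval x :=
    ⟨isPolyMN_of_polynomial u₀ hu₀deg, fun _ => ⟨hu₀m, hu₀p⟩⟩
  let L : Module.Dual ℝ (trialSpace M N) :=
    { toFun := fun w => -(heatForm ε a b (fun x _ => u₀.eval x) w +
        slabIntegral a b fun x t => G x t * (w : ℝ → ℝ → ℝ) x t)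
      map_add' := fun w w' => by
        have hsum := slabIntegral_add (a := a) (b := b)
          (f := fun x t => G x t * (w : ℝ → ℝ → ℝ) x t)
          (g := fun x t => G x t * (w' : ℝ → ℝ → ℝ) x t) (hG.mul w.2.1.continuous)
          (hG.mul w'.2.1.continuous)
        simp only [← mul_add] at hsum
        rw [Submodule.coe_add, heatForm_add_right hu₀.1 w.2.1 w'.2.1]
        simp only [Pi.add_apply, hsum]
        ring
      map_smul' := fun r w => by
        have hmul := slabIntegral_const_mul (a := a) (b := b) r
          fun x t => G x t * (w : ℝ → ℝ → ℝ) x t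
        rw [Submodule.coe_smul, heatForm_smul_right r _ w.2.1]
        simp only [Pi.smul_apply, smul_eq_mul, mul_left_comm _ r, hmul, RingHom.id_apply]
        ring }
  obtain ⟨d, hd, hd0, hdL⟩ := exists_heatForm_eq hε.le hab L
  have hsol : MemV M (N + 1) ((fun x _ => u₀.eval x) + d) :=
    (trialSpace M (N + 1)).add_mem hu₀ hd
  refine ⟨(fun x _ => u₀.eval x) + d, ⟨hsol, fun x _ => by simp [hd0], fun w hw => ?_⟩, ?_⟩
  · rw [hform hsol hw, heatForm_add_left hu₀.1 hd.1 hw.1, hdL ⟨w, hw⟩]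
    simp only [L, LinearMap.coe_mk, AddHom.coe_mk]
    ring
  · rintro k ⟨hk, hk0, hkeq⟩
    have hneg : MemV M (N + 1) ((-1 : ℝ) • ((fun x _ => u₀.eval x) + d)) :=
      (trialSpace M (N + 1)).smul_mem _ hsol
    have hzero : k + (-1 : ℝ) • ((fun x _ => u₀.eval x) + d) = 0 := by
      refine eq_zero_of_heatForm_eq_zero hε.le hab ((trialSpace M (N + 1)).add_mem hk hneg)
        (fun x hx => by simp [hk0 x hx, hd0]) fun w hw => ?_
      have hkw := hkeq w hw
      rw [hform hk hw] at hkw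
      have hdw := hdL ⟨w, hw⟩
      simp only [L, LinearMap.coe_mk, AddHom.coe_mk] at hdw
      rw [heatForm_add_left hk.1 hneg.1 hw.1, heatForm_smul_left _ hsol.1,
        heatForm_add_left hu₀.1 hd.1 hw.1]
      linarith
    rwa [neg_one_smul, ← sub_eq_add_neg, sub_eq_zero] at hzero
end

section
/- Fix integers M ≥ 1, N ≥ 1, reals ε > 0, L > 0 and a < b with τ := b − a < ε/L, a function f : ℝ → ℝ that is Lipschitz continuous with constant L, and a real polynomial u₀ of degree at most M with u₀(−1) = u₀(1) = 0. Then there exists exactly one h ∈ V_{M,N} with h(x,a) = u₀(x) for all x ∈ [−1,1] solving the implicit ESET scheme on [a,b]: ∫_a^b ∫₋₁¹ [∂_t h·w + ε ∂_x h·∂_x w + (1/ε) f(h)·w] dx dt = 0 for every w ∈ W_{M,N−1}. -/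
open MeasureTheory intervalIntegral

theorem exists_eq_zero_of_strongly_monotone {H : Type*} [NormedAddCommGroup H]
    [InnerProductSpace ℝ H] [FiniteDimensional ℝ H] (B : H → H →ₗ[ℝ] ℝ) {m K : ℝ}
    (hm : 0 < m) (hmono : ∀ u v, m * ‖u - v‖ ^ 2 ≤ B u (u - v) - B v (u - v))
    (hlip : ∀ u v w, |B u w - B v w| ≤ K * ‖u - v‖ * ‖w‖) : ∃ u, B u = 0 := by
  have : CompleteSpace H := FiniteDimensional.complete ℝ H
  obtain ⟨k, hk, hKk, hmk⟩ : ∃ k : ℝ, 0 < k ∧ K ≤ k ∧ m ≤ k :=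
    ⟨max K m, lt_max_of_lt_right hm, le_max_left _ _, le_max_right _ _⟩
  set F : H → H := fun u => (InnerProductSpace.toDual ℝ H).symm (B u).toContinuousLinearMap
  have hF : ∀ u w, inner ℝ (F u) w = B u w := fun u w => by simp [F]
  have hFlip : ∀ u v, ‖F u - F v‖ ≤ k * ‖u - v‖ := by
    intro u v
    rcases eq_or_lt_of_le (norm_nonneg (F u - F v)) with h0 | h0
    · rw [← h0]; positivity
    · have h1 : ‖F u - F v‖ ^ 2 ≤ K * ‖u - v‖ * ‖F u - F v‖ := by
        rw [← real_inner_self_eq_norm_sq]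
        calc inner ℝ (F u - F v) (F u - F v)
            = B u (F u - F v) - B v (F u - F v) := by rw [inner_sub_left, hF, hF]
          _ ≤ _ := (le_abs_self _).trans (hlip _ _ _)
      have h2 : ‖F u - F v‖ ≤ K * ‖u - v‖ := by nlinarith
      exact h2.trans (by gcongr)
  set ρ : ℝ := m / k ^ 2
  have hρ : 0 < ρ := by positivity
  have hρk : ρ * k ^ 2 = m := by simp only [ρ]; field_simp
  have hq : ρ * m ≤ 1 := by
    simp only [ρ]; rw [div_mul_eq_mul_div, div_le_one (by positivity)]; nlinarith
  set q : ℝ := √(1 - ρ * m)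
  have hq2 : q ^ 2 = 1 - ρ * m := Real.sq_sqrt (by linarith)
  have hq0 : 0 ≤ q := Real.sqrt_nonneg _
  have hq1 : q < 1 := by nlinarith [mul_pos hρ hm]
  have hT : ContractingWith ⟨q, hq0⟩ (fun u => u - ρ • F u) := by
    refine ⟨by exact_mod_cast hq1, LipschitzWith.of_dist_le_mul fun u v => ?_⟩
    rw [dist_eq_norm, dist_eq_norm]
    change _ ≤ q * ‖u - v‖
    refine abs_le_of_sq_le_sq' ?_ (by positivity) |>.2
    have e : u - ρ • F u - (v - ρ • F v) = (u - v) - ρ • (F u - F v) := by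
      rw [smul_sub]; abel
    have h1 : m * ‖u - v‖ ^ 2 ≤ inner ℝ (u - v) (F u - F v) := by
      rw [real_inner_comm, inner_sub_left, hF, hF]; exact hmono u v
    have h2 : ‖F u - F v‖ ^ 2 ≤ k ^ 2 * ‖u - v‖ ^ 2 := by
      rw [← mul_pow]; exact pow_le_pow_left₀ (norm_nonneg _) (hFlip u v) 2
    rw [e, norm_sub_sq_real, inner_smul_right, norm_smul, mul_pow, mul_pow, hq2,
      Real.norm_eq_abs, sq_abs]
    have h3 := mul_le_mul_of_nonneg_left h1 hρ.le
    have h4 := mul_le_mul_of_nonneg_left h2 (sq_nonneg ρ)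
    have h5 : ρ ^ 2 * (k ^ 2 * ‖u - v‖ ^ 2) = ρ * m * ‖u - v‖ ^ 2 := by rw [← hρk]; ring
    linarith
  refine ⟨hT.fixedPoint, LinearMap.ext fun w => ?_⟩
  have hfix : hT.fixedPoint - ρ • F hT.fixedPoint = hT.fixedPoint := hT.fixedPoint_isFixedPt
  have h0 : F hT.fixedPoint = 0 := by
    rw [sub_eq_self] at hfix
    exact (smul_eq_zero.1 hfix).resolve_left hρ.ne'
  rw [← hF, h0, inner_zero_left, LinearMap.zero_apply]

theorem exists_pos_mul_norm_sq_le {E : Type*} [NormedAddCommGroup E] [NormedSpace ℝ E]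
    [FiniteDimensional ℝ E] {q : E → ℝ} (hcont : Continuous q)
    (hhom : ∀ (r : ℝ) v, q (r • v) = r ^ 2 * q v) (hpos : ∀ v, v ≠ 0 → 0 < q v) :
    ∃ m : ℝ, 0 < m ∧ ∀ v, m * ‖v‖ ^ 2 ≤ q v := by
  have : ProperSpace E := FiniteDimensional.proper ℝ E
  have hq0 : q 0 = 0 := by simpa using hhom 0 0
  rcases (Metric.sphere (0 : E) 1).eq_empty_or_nonempty with hS | hS
  · refine ⟨1, one_pos, fun v => ?_⟩
    by_cases hv : v = 0
    · simp [hv, hq0]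
    · have : ‖v‖⁻¹ • v ∈ Metric.sphere (0 : E) 1 := by simp [norm_smul, hv]
      simp [hS] at this
  · obtain ⟨s, hs, hmin⟩ := (isCompact_sphere (0 : E) 1).exists_isMinOn hS hcont.continuousOn
    refine ⟨q s, hpos s fun h => by simp [h] at hs, fun v => ?_⟩
    by_cases hv : v = 0
    · simp [hv, hq0]
    · have hmem : ‖v‖⁻¹ • v ∈ Metric.sphere (0 : E) 1 := by simp [norm_smul, hv]
      have h := hmin hmem
      have hn : 0 < ‖v‖ := norm_pos_iff.2 hv
      simp only [Set.mem_ofPred_eq, hhom] at h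
      calc q s * ‖v‖ ^ 2 ≤ (‖v‖⁻¹) ^ 2 * q v * ‖v‖ ^ 2 := by gcongr
        _ = q v := by field_simp

theorem sq_le_mul_integral_deriv_sq {a b t : ℝ} (hab : a < b) (ht : t ∈ Set.Icc a b)
    {g g' : ℝ → ℝ} (hg : ∀ s, HasDerivAt g (g' s) s) (hg' : Continuous g') (hga : g a = 0) :
    g t ^ 2 ≤ (b - a) * ∫ s in a..b, g' s ^ 2 := by
  have hτ : 0 < b - a := sub_pos.2 hab
  have hi : ∀ {u v : ℝ} {φ : ℝ → ℝ}, Continuous φ → IntervalIntegrable φ volume u v :=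
    fun h => h.intervalIntegrable _ _
  have hft : ∫ s in a..t, g' s = g t := by
    rw [integral_eq_sub_of_hasDerivAt (fun s _ => hg s) (hi hg'), hga, sub_zero]
  have hle : ∫ s in a..t, g' s ^ 2 ≤ ∫ s in a..b, g' s ^ 2 :=
    integral_mono_interval le_rfl ht.1 ht.2 (Filter.Eventually.of_forall fun s => sq_nonneg _)
      (hi (by fun_prop))
  set r := g t / (b - a) with hr
  have hgr : g t = r * (b - a) := by rw [hr]; field_simp
  have h0 : 0 ≤ ∫ s in a..t, (g' s - r) ^ 2 :=
    integral_nonneg ht.1 fun s _ => sq_nonneg _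
  have hexp : ∫ s in a..t, (g' s - r) ^ 2
      = (∫ s in a..t, g' s ^ 2) - 2 * r * g t + (t - a) * r ^ 2 := by
    have : ∀ s, (g' s - r) ^ 2 = g' s ^ 2 - 2 * r * g' s + r ^ 2 := fun s => by ring
    simp only [this]
    rw [intervalIntegral.integral_add (hi (by fun_prop)) (hi (by fun_prop)),
      intervalIntegral.integral_sub (hi (by fun_prop)) (hi (by fun_prop)),
      intervalIntegral.integral_const_mul, hft, intervalIntegral.integral_const, smul_eq_mul]
  have h1 : (t - a) * r ^ 2 ≤ (b - a) * r ^ 2 := by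
    have := ht.2
    gcongr
  have h2 : r ^ 2 * (b - a) ≤ ∫ s in a..b, g' s ^ 2 := by
    rw [hexp, hgr] at h0
    nlinarith
  calc g t ^ 2 = (b - a) * (r ^ 2 * (b - a)) := by rw [hgr]; ring
    _ ≤ _ := by gcongr

theorem integral_sq_le_sq_mul_integral_deriv_sq {a b : ℝ} (hab : a < b)
    {g g' : ℝ → ℝ} (hg : ∀ s, HasDerivAt g (g' s) s) (hg' : Continuous g') (hga : g a = 0) :
    ∫ t in a..b, g t ^ 2 ≤ (b - a) ^ 2 * ∫ t in a..b, g' t ^ 2 := by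
  have hgc : Continuous g := continuous_iff_continuousAt.2 fun s => (hg s).continuousAt
  have h := intervalIntegral.integral_mono_on hab.le
    (Continuous.intervalIntegrable (u := fun t => g t ^ 2) (μ := volume) (by fun_prop) a b)
    (intervalIntegrable_const (c := (b - a) * ∫ s in a..b, g' s ^ 2))
    fun t ht => sq_le_mul_integral_deriv_sq hab ht hg hg' hga
  rw [intervalIntegral.integral_const, smul_eq_mul] at h
  linarith

theorem integral_mul_deriv_nonneg {a b : ℝ}
    {g g' : ℝ → ℝ} (hg : ∀ s, HasDerivAt g (g' s) s) (hg' : Continuous g') (hga : g a = 0) :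
    0 ≤ ∫ t in a..b, g t * g' t := by
  have hgc : Continuous g := continuous_iff_continuousAt.2 fun s => (hg s).continuousAt
  rw [integral_eq_sub_of_hasDerivAt (f := fun t => g t ^ 2 / 2) (f' := fun t => g t * g' t)
    (fun s _ => (((hg s).pow 2).div_const 2).congr_deriv (by norm_num; ring))
    ((hgc.mul hg').intervalIntegrable _ _), hga]
  nlinarith [sq_nonneg (g b)]

theorem coeff_eq_zero_of_infinite {n : ℕ} {c : Fin n → ℝ} {S : Set ℝ} (hS : S.Infinite)
    (h : ∀ x ∈ S, ∑ i, c i * x ^ (i : ℕ) = 0) : c = 0 := by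
  have hp : (∑ i : Fin n, Polynomial.C (c i) * Polynomial.X ^ (i : ℕ)) = 0 :=
    Polynomial.eq_zero_of_infinite_isRoot _ <| hS.mono fun x hx => by
      simpa [Polynomial.IsRoot, Polynomial.eval_finsetSum] using h x hx
  ext i
  have := congrArg (fun p => p.coeff i) hp
  simpa [Polynomial.finsetSum_coeff, Polynomial.coeff_X_pow, Fin.val_inj] using this

/-- Lebesgue measure on the space-time slab `(-1, 1] × (a, b]`. -/
noncomputable def slabMeasure (a b : ℝ) : Measure (ℝ × ℝ) :=
  (volume.restrict (Set.Ioc (-1) 1)).prod (volume.restrict (Set.Ioc a b))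

theorem slabMeasure_eq (a b : ℝ) :
    slabMeasure a b = volume.restrict (Set.Ioc (-1) 1 ×ˢ Set.Ioc a b) := by
  rw [slabMeasure, Measure.prod_restrict, ← Measure.volume_eq_prod]

theorem integrable_slabMeasure {a b : ℝ} {φ : ℝ × ℝ → ℝ} (h : Continuous φ) :
    Integrable φ (slabMeasure a b) := by
  rw [slabMeasure_eq]
  exact (h.continuousOn.integrableOn_compact (isCompact_Icc.prod isCompact_Icc)).mono_set
    (Set.prod_mono Set.Ioc_subset_Icc_self Set.Ioc_subset_Icc_self)

theorem integral_slabMeasure {a b : ℝ} (hab : a ≤ b) {φ : ℝ × ℝ → ℝ} (h : Continuous φ) :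
    ∫ z, φ z ∂slabMeasure a b = ∫ x in (-1 : ℝ)..1, ∫ t in a..b, φ (x, t) := by
  rw [slabMeasure, integral_prod _ (integrable_slabMeasure h)]
  simp only [integral_of_le hab, integral_of_le (show (-1 : ℝ) ≤ 1 by norm_num)]

theorem integral_slabMeasure_symm {a b : ℝ} (hab : a ≤ b) {φ : ℝ × ℝ → ℝ} (h : Continuous φ) :
    ∫ z, φ z ∂slabMeasure a b = ∫ t in a..b, ∫ x in (-1 : ℝ)..1, φ (x, t) := by
  rw [slabMeasure, integral_prod_symm _ (integrable_slabMeasure h)]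
  simp only [integral_of_le hab, integral_of_le (show (-1 : ℝ) ≤ 1 by norm_num)]

theorem eq_zero_of_integral_slabMeasure_sq_le {a b : ℝ} {φ : ℝ × ℝ → ℝ} (h : Continuous φ)
    (h0 : ∫ z, φ z ^ 2 ∂slabMeasure a b ≤ 0) {x t : ℝ} (hx : x ∈ Set.Ioo (-1) 1)
    (ht : t ∈ Set.Ioo a b) : φ (x, t) = 0 := by
  have h1 : ∫ z, φ z ^ 2 ∂slabMeasure a b = 0 :=
    le_antisymm h0 (integral_nonneg fun z => sq_nonneg _)
  rw [integral_eq_zero_iff_of_nonneg (fun z => sq_nonneg _)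
    (integrable_slabMeasure (h.pow 2)), slabMeasure_eq] at h1
  have h2 : φ =ᵐ[volume.restrict (Set.Ioo (-1) 1 ×ˢ Set.Ioo a b)] fun _ => 0 := by
    filter_upwards [ae_restrict_of_ae_restrict_of_subset
      (Set.prod_mono Set.Ioo_subset_Ioc_self Set.Ioo_subset_Ioc_self) h1] with z hz
    simpa using hz
  exact Measure.eqOn_open_of_ae_eq h2 (isOpen_Ioo.prod isOpen_Ioo) h.continuousOn
    continuousOn_const (Set.mk_mem_prod hx ht)

/-- Coefficients of polynomials of degree at most `M` in `x` and at most `N` in `t`. -/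
abbrev CoeffSpace (M N : ℕ) : Type := EuclideanSpace ℝ (Fin (M + 1) × Fin (N + 1))

/-- The derivative of the monomial `x ^ n`. -/
def derivMonomial (n : ℕ) (x : ℝ) : ℝ := n * x ^ (n - 1)

/-- The sum `∑ c i j * α i x * β j t` at `z = (x, t)`. -/
noncomputable def tensorSum {M N : ℕ} (α β : ℕ → ℝ → ℝ) (c : CoeffSpace M N) (z : ℝ × ℝ) : ℝ :=
  ∑ p, c p * (α p.1 z.1 * β p.2 z.2)

/-- The polynomial with coefficients `c`. -/
noncomputable abbrev polyVal {M N : ℕ} (c : CoeffSpace M N) : ℝ × ℝ → ℝ :=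
  tensorSum (fun n x => x ^ n) (fun n t => t ^ n) c

/-- The space derivative of the polynomial with coefficients `c`. -/
noncomputable abbrev polyDx {M N : ℕ} (c : CoeffSpace M N) : ℝ × ℝ → ℝ :=
  tensorSum derivMonomial (fun n t => t ^ n) c

/-- The time derivative of the polynomial with coefficients `c`. -/
noncomputable abbrev polyDt {M N : ℕ} (c : CoeffSpace M N) : ℝ × ℝ → ℝ :=
  tensorSum (fun n x => x ^ n) derivMonomial c

/-- The mixed derivative of the polynomial with coefficients `c`. -/
noncomputable abbrev polyDxt {M N : ℕ} (c : CoeffSpace M N) : ℝ × ℝ → ℝ :=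
  tensorSum derivMonomial derivMonomial c

section TensorSum

variable {M N : ℕ} {α β : ℕ → ℝ → ℝ}

theorem tensorSum_add (c d : CoeffSpace M N) (z : ℝ × ℝ) :
    tensorSum α β (c + d) z = tensorSum α β c z + tensorSum α β d z := by
  simp [tensorSum, add_mul, Finset.sum_add_distrib]

theorem tensorSum_sub (c d : CoeffSpace M N) (z : ℝ × ℝ) :
    tensorSum α β (c - d) z = tensorSum α β c z - tensorSum α β d z := by
  simp [tensorSum, sub_mul, Finset.sum_sub_distrib]

theorem tensorSum_smul (r : ℝ) (c : CoeffSpace M N) (z : ℝ × ℝ) :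
    tensorSum α β (r • c) z = r * tensorSum α β c z := by
  simp [tensorSum, mul_assoc, Finset.mul_sum]

theorem tensorSum_zero (z : ℝ × ℝ) : tensorSum α β (0 : CoeffSpace M N) z = 0 := by
  simp [tensorSum]

theorem continuous_tensorSum (hα : ∀ n, Continuous (α n)) (hβ : ∀ n, Continuous (β n))
    (c : CoeffSpace M N) : Continuous (tensorSum α β c) := by
  unfold tensorSum
  fun_prop

theorem hasDerivAt_tensorSum_fst {α' : ℕ → ℝ → ℝ} (h : ∀ n x, HasDerivAt (α n) (α' n x) x)
    (c : CoeffSpace M N) (x t : ℝ) :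
    HasDerivAt (fun y => tensorSum α β c (y, t)) (tensorSum α' β c (x, t)) x :=
  HasDerivAt.fun_sum fun p _ => by
    simpa using ((h p.1 x).mul_const (β p.2 t)).const_mul (c p)

theorem hasDerivAt_tensorSum_snd {β' : ℕ → ℝ → ℝ} (h : ∀ n t, HasDerivAt (β n) (β' n t) t)
    (c : CoeffSpace M N) (x t : ℝ) :
    HasDerivAt (fun s => tensorSum α β c (x, s)) (tensorSum α β' c (x, t)) t :=
  HasDerivAt.fun_sum fun p _ => by
    simpa using ((h p.2 t).const_mul (α p.1 x)).const_mul (c p)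

/-- The sum of the absolute values of the functions combined by `tensorSum`. -/
noncomputable def tensorBound (M N : ℕ) (α β : ℕ → ℝ → ℝ) (z : ℝ × ℝ) : ℝ :=
  ∑ p : Fin (M + 1) × Fin (N + 1), |α p.1 z.1 * β p.2 z.2|

theorem tensorBound_nonneg (z : ℝ × ℝ) : 0 ≤ tensorBound M N α β z :=
  Finset.sum_nonneg fun _ _ => abs_nonneg _

theorem continuous_tensorBound (hα : ∀ n, Continuous (α n)) (hβ : ∀ n, Continuous (β n)) :
    Continuous (tensorBound M N α β) := by
  unfold tensorBound
  fun_prop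

theorem abs_tensorSum_le (c : CoeffSpace M N) (z : ℝ × ℝ) :
    |tensorSum α β c z| ≤ ‖c‖ * tensorBound M N α β z := by
  rw [tensorSum, tensorBound, Finset.mul_sum]
  refine (Finset.abs_sum_le_sum_abs _ _).trans (Finset.sum_le_sum fun p _ => ?_)
  rw [abs_mul]
  gcongr
  exact PiLp.norm_apply_le c p

end TensorSum

theorem continuous_derivMonomial (n : ℕ) : Continuous (derivMonomial n) := by
  unfold derivMonomial
  fun_prop

theorem hasDerivAt_derivMonomial (n : ℕ) (x : ℝ) :
    HasDerivAt (fun y : ℝ => y ^ n) (derivMonomial n x) x := hasDerivAt_pow n x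

section PolyVal

variable {M N : ℕ}

theorem continuous_polyVal (c : CoeffSpace M N) : Continuous (polyVal c) :=
  continuous_tensorSum (fun n => continuous_pow n) (fun n => continuous_pow n) c

theorem continuous_polyDx (c : CoeffSpace M N) : Continuous (polyDx c) :=
  continuous_tensorSum continuous_derivMonomial (fun n => continuous_pow n) c

theorem continuous_polyDt (c : CoeffSpace M N) : Continuous (polyDt c) :=
  continuous_tensorSum (fun n => continuous_pow n) continuous_derivMonomial c

theorem continuous_polyDxt (c : CoeffSpace M N) : Continuous (polyDxt c) :=
  continuous_tensorSum continuous_derivMonomial continuous_derivMonomial c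

theorem hasDerivAt_polyVal_snd (c : CoeffSpace M N) (x t : ℝ) :
    HasDerivAt (fun s => polyVal c (x, s)) (polyDt c (x, t)) t :=
  hasDerivAt_tensorSum_snd hasDerivAt_derivMonomial c x t

theorem hasDerivAt_polyVal_fst (c : CoeffSpace M N) (x t : ℝ) :
    HasDerivAt (fun y => polyVal c (y, t)) (polyDx c (x, t)) x :=
  hasDerivAt_tensorSum_fst hasDerivAt_derivMonomial c x t

theorem hasDerivAt_polyDx_snd (c : CoeffSpace M N) (x t : ℝ) :
    HasDerivAt (fun s => polyDx c (x, s)) (polyDxt c (x, t)) t :=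
  hasDerivAt_tensorSum_snd hasDerivAt_derivMonomial c x t

theorem hasDerivAt_polyDt_fst (c : CoeffSpace M N) (x t : ℝ) :
    HasDerivAt (fun y => polyDt c (y, t)) (polyDxt c (x, t)) x :=
  hasDerivAt_tensorSum_fst hasDerivAt_derivMonomial c x t

theorem isPolyMN_iff {h : ℝ → ℝ → ℝ} :
    IsPolyMN M N h ↔ ∃ c : CoeffSpace M N, ∀ x t, h x t = polyVal c (x, t) := by
  constructor
  · rintro ⟨c, hc⟩
    refine ⟨WithLp.toLp 2 fun p => c p.1 p.2, fun x t => ?_⟩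
    simp only [hc, tensorSum, Fintype.sum_prod_type, mul_assoc]
  · rintro ⟨c, hc⟩
    refine ⟨fun i j => c (i, j), fun x t => ?_⟩
    simp only [hc, tensorSum, Fintype.sum_prod_type, mul_assoc]

theorem eq_zero_of_polyVal_eq_zero {c : CoeffSpace M N} {S T : Set ℝ} (hS : S.Infinite)
    (hT : T.Infinite) (h : ∀ x ∈ S, ∀ t ∈ T, polyVal c (x, t) = 0) : c = 0 := by
  have h1 : ∀ t ∈ T, (fun i : Fin (M + 1) => ∑ j : Fin (N + 1), c (i, j) * t ^ (j : ℕ)) = 0 := by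
    intro t ht
    refine coeff_eq_zero_of_infinite hS fun x hx => ?_
    rw [← h x hx t ht]
    simp only [tensorSum, Fintype.sum_prod_type, Finset.sum_mul]
    exact Finset.sum_congr rfl fun i _ => Finset.sum_congr rfl fun j _ => by ring
  ext ⟨i, j⟩
  exact congrFun (coeff_eq_zero_of_infinite (c := fun j => c (i, j)) hT
    fun t ht => congrFun (h1 t ht) i) j

/-- Coefficients of the polynomials vanishing at `x = ±1` and at `t = a`. -/
def homogeneousTrial (M N : ℕ) (a : ℝ) : Submodule ℝ (CoeffSpace M N) where
  carrier := {c | (∀ t, polyVal c (-1, t) = 0 ∧ polyVal c (1, t) = 0) ∧ ∀ x, polyVal c (x, a) = 0}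
  add_mem' := fun hc hd => by
    constructor <;> intro <;> simp [tensorSum_add, hc.1 _, hd.1 _, hc.2 _, hd.2 _]
  zero_mem' := by constructor <;> intro <;> simp [tensorSum_zero]
  smul_mem' := fun r c hc => by
    constructor <;> intro <;> simp [tensorSum_smul, hc.1 _, hc.2 _]

theorem mem_homogeneousTrial {a : ℝ} {c : CoeffSpace M N} :
    c ∈ homogeneousTrial M N a ↔
      (∀ t, polyVal c (-1, t) = 0 ∧ polyVal c (1, t) = 0) ∧ ∀ x, polyVal c (x, a) = 0 :=
  Iff.rfl

theorem polyDx_initial {a : ℝ} {c : CoeffSpace M N} (hc : c ∈ homogeneousTrial M N a) (x : ℝ) :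
    polyDx c (x, a) = 0 := by
  have h := hasDerivAt_polyVal_fst c x a
  simp only [(mem_homogeneousTrial.1 hc).2] at h
  exact h.unique (hasDerivAt_const x 0)

theorem integral_polyVal_sq_le {a b : ℝ} (hab : a < b) {c : CoeffSpace M N}
    (hc : c ∈ homogeneousTrial M N a) :
    ∫ z, polyVal c z ^ 2 ∂slabMeasure a b ≤
      (b - a) ^ 2 * ∫ z, polyDt c z ^ 2 ∂slabMeasure a b := by
  have hv := continuous_polyVal c
  have ht := continuous_polyDt c
  rw [integral_slabMeasure hab.le (by fun_prop), integral_slabMeasure hab.le (by fun_prop),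
    ← intervalIntegral.integral_const_mul]
  refine intervalIntegral.integral_mono_on (by norm_num)
    (Continuous.intervalIntegrable ?_ _ _) (Continuous.intervalIntegrable ?_ _ _) fun x _ =>
      integral_sq_le_sq_mul_integral_deriv_sq hab (hasDerivAt_polyVal_snd c x)
        (by fun_prop) ((mem_homogeneousTrial.1 hc).2 x)
  · exact intervalIntegral.continuous_parametric_intervalIntegral_of_continuous' (by fun_prop) _ _
  · exact continuous_const.mul
      (intervalIntegral.continuous_parametric_intervalIntegral_of_continuous' (by fun_prop) _ _)

theorem integral_polyDx_mul_polyDxt_nonneg {a b : ℝ} (hab : a < b) {c : CoeffSpace M N}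
    (hc : c ∈ homogeneousTrial M N a) :
    0 ≤ ∫ z, polyDx c z * polyDxt c z ∂slabMeasure a b := by
  have hx := continuous_polyDx c
  have hxt := continuous_polyDxt c
  rw [integral_slabMeasure hab.le (by fun_prop)]
  exact intervalIntegral.integral_nonneg (by norm_num) fun x _ =>
    integral_mul_deriv_nonneg (hasDerivAt_polyDx_snd c x) (by fun_prop) (polyDx_initial hc x)

theorem eq_zero_of_integral_polyDt_sq_le {a b : ℝ} (hab : a < b) {c : CoeffSpace M N}
    (hc : c ∈ homogeneousTrial M N a) (h : ∫ z, polyDt c z ^ 2 ∂slabMeasure a b ≤ 0) : c = 0 := by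
  have h0 : ∫ z, polyVal c z ^ 2 ∂slabMeasure a b ≤ 0 :=
    (integral_polyVal_sq_le hab hc).trans (mul_nonpos_of_nonneg_of_nonpos (sq_nonneg _) h)
  exact eq_zero_of_polyVal_eq_zero (Set.Ioo_infinite (show (-1 : ℝ) < 1 by norm_num))
    (Set.Ioo_infinite hab) fun x hx t ht =>
      eq_zero_of_integral_slabMeasure_sq_le (continuous_polyVal c) h0 hx ht

theorem continuous_integral_polyDt_sq (a b : ℝ) :
    Continuous fun c : CoeffSpace M N => ∫ z, polyDt c z ^ 2 ∂slabMeasure a b := by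
  have h : ∀ p : Fin (M + 1) × Fin (N + 1),
      Continuous fun z : ℝ × ℝ => z.1 ^ (p.1 : ℕ) * derivMonomial p.2 z.2 := fun p => by
    have := continuous_derivMonomial p.2
    fun_prop
  have : ∀ c : CoeffSpace M N, ∫ z, polyDt c z ^ 2 ∂slabMeasure a b =
      ∑ p, ∑ q, c p * c q * ∫ z, (z.1 ^ (p.1 : ℕ) * derivMonomial p.2 z.2) *
        (z.1 ^ (q.1 : ℕ) * derivMonomial q.2 z.2) ∂slabMeasure a b := by
    intro c
    simp only [tensorSum, sq, Finset.sum_mul_sum]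
    rw [integral_finsetSum _ fun p _ => integrable_finsetSum _ fun q _ =>
      integrable_slabMeasure (by have := h p; have := h q; fun_prop)]
    refine Finset.sum_congr rfl fun p _ => ?_
    rw [integral_finsetSum _ fun q _ =>
      integrable_slabMeasure (by have := h p; have := h q; fun_prop)]
    refine Finset.sum_congr rfl fun q _ => ?_
    rw [← MeasureTheory.integral_const_mul]
    congr 1
    ext z
    ring
  simp only [this]
  fun_prop

/-- The integrand of the scheme for the trial function with coefficients `c`, tested against the
time derivative of the polynomial with coefficients `d`. -/
noncomputable def schemeIntegrand (ε : ℝ) (f : ℝ → ℝ) (c d : CoeffSpace M N) (z : ℝ × ℝ) : ℝ :=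
  polyDt c z * polyDt d z + ε * polyDx c z * polyDxt d z + (1 / ε) * f (polyVal c z) * polyDt d z

theorem continuous_schemeIntegrand {ε : ℝ} {f : ℝ → ℝ} (hf : Continuous f)
    (c d : CoeffSpace M N) : Continuous (schemeIntegrand ε f c d) := by
  have h1 := continuous_polyVal c
  have h2 := continuous_polyDx c
  have h3 := continuous_polyDt c
  have h4 := continuous_polyDt d
  have h5 := continuous_polyDxt d
  unfold schemeIntegrand
  fun_prop

/-- The weak form of the scheme, as a linear functional of the test function. -/
noncomputable def schemeForm (ε a b : ℝ) {f : ℝ → ℝ} (hf : Continuous f) (c : CoeffSpace M N) :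
    CoeffSpace M N →ₗ[ℝ] ℝ where
  toFun d := ∫ z, schemeIntegrand ε f c d z ∂slabMeasure a b
  map_add' d e := by
    rw [← integral_add (integrable_slabMeasure (continuous_schemeIntegrand hf c d))
      (integrable_slabMeasure (continuous_schemeIntegrand hf c e))]
    congr 1
    ext z
    simp only [schemeIntegrand, tensorSum_add]
    ring
  map_smul' r d := by
    rw [RingHom.id_apply, smul_eq_mul, ← MeasureTheory.integral_const_mul]
    congr 1
    ext z
    simp only [schemeIntegrand, tensorSum_smul]
    ring

theorem schemeForm_apply (ε a b : ℝ) {f : ℝ → ℝ} (hf : Continuous f) (c d : CoeffSpace M N) :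
    schemeForm ε a b hf c d = ∫ z, schemeIntegrand ε f c d z ∂slabMeasure a b := rfl

theorem schemeForm_monotone {ε L a b : ℝ} (hε : 0 < ε) (hL : 0 < L) (hab : a < b)
    {f : ℝ → ℝ} (hfc : Continuous f) (hf : ∀ x y : ℝ, |f x - f y| ≤ L * |x - y|)
    {c d : CoeffSpace M N} (hcd : c - d ∈ homogeneousTrial M N a) :
    (1 - L / ε * (b - a)) * ∫ z, polyDt (c - d) z ^ 2 ∂slabMeasure a b ≤
      schemeForm ε a b hfc c (c - d) - schemeForm ε a b hfc d (c - d) := by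
  have hτ : 0 < b - a := sub_pos.2 hab
  set e := c - d with he
  have hv := continuous_polyVal e
  have hx := continuous_polyDx e
  have ht := continuous_polyDt e
  have hxt := continuous_polyDxt e
  set k := L / ε with hk
  have hk0 : 0 < k := by positivity
  rw [schemeForm_apply, schemeForm_apply,
    ← integral_sub (integrable_slabMeasure (continuous_schemeIntegrand hfc c e))
      (integrable_slabMeasure (continuous_schemeIntegrand hfc d e))]
  have hpt : ∀ z, (1 - k * (b - a) / 2) * polyDt e z ^ 2 + ε * (polyDx e z * polyDxt e z)
      - k / (2 * (b - a)) * polyVal e z ^ 2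
      ≤ schemeIntegrand ε f c e z - schemeIntegrand ε f d e z := by
    intro z
    have hcd : ∀ {α β : ℕ → ℝ → ℝ}, tensorSum α β c z = tensorSum α β d z + tensorSum α β e z := by
      intro α β
      rw [← tensorSum_add, he, add_sub_cancel]
    have h1 : |(f (polyVal c z) - f (polyVal d z)) * polyDt e z|
        ≤ L * (|polyVal e z| * |polyDt e z|) := by
      rw [abs_mul, ← mul_assoc]
      refine mul_le_mul_of_nonneg_right ((hf _ _).trans_eq ?_) (abs_nonneg _)
      have hcv : polyVal c z = polyVal d z + polyVal e z := hcd
      rw [hcv, add_sub_cancel_left]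
    have h2 : |polyVal e z| * |polyDt e z|
        ≤ polyVal e z ^ 2 / (2 * (b - a)) + (b - a) / 2 * polyDt e z ^ 2 := by
      rw [← sq_abs (polyVal e z), ← sq_abs (polyDt e z)]
      generalize |polyVal e z| = p
      generalize |polyDt e z| = q
      have : p ^ 2 / (2 * (b - a)) + (b - a) / 2 * q ^ 2 - p * q
          = (p - (b - a) * q) ^ 2 / (2 * (b - a)) := by field_simp; ring
      have : 0 ≤ (p - (b - a) * q) ^ 2 / (2 * (b - a)) := by positivity
      linarith
    have h3 := (abs_le.1 h1).1
    have h4 : -(L * (polyVal e z ^ 2 / (2 * (b - a)) + (b - a) / 2 * polyDt e z ^ 2))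
        ≤ (f (polyVal c z) - f (polyVal d z)) * polyDt e z := by
      nlinarith [mul_le_mul_of_nonneg_left h2 hL.le]
    have h5 := mul_le_mul_of_nonneg_left h4 (one_div_pos.2 hε).le
    have h6 : schemeIntegrand ε f c e z - schemeIntegrand ε f d e z
        = polyDt e z ^ 2 + ε * (polyDx e z * polyDxt e z)
          + 1 / ε * ((f (polyVal c z) - f (polyVal d z)) * polyDt e z) := by
      have hct : polyDt c z = polyDt d z + polyDt e z := hcd
      have hcx : polyDx c z = polyDx d z + polyDx e z := hcd
      rw [schemeIntegrand, schemeIntegrand, hct, hcx]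
      ring
    rw [h6]
    refine le_trans (le_of_eq ?_) (add_le_add_right h5 _)
    rw [hk]
    field_simp
    ring
  have hmono := integral_mono (μ := slabMeasure a b) (integrable_slabMeasure (by fun_prop))
    (integrable_slabMeasure ((continuous_schemeIntegrand hfc c e).sub
      (continuous_schemeIntegrand hfc d e))) hpt
  refine le_trans ?_ hmono
  rw [integral_sub (integrable_slabMeasure (by fun_prop)) (integrable_slabMeasure (by fun_prop)),
    integral_add (integrable_slabMeasure (by fun_prop)) (integrable_slabMeasure (by fun_prop)),
    MeasureTheory.integral_const_mul, MeasureTheory.integral_const_mul, MeasureTheory.integral_const_mul]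
  have h7 := mul_nonneg hε.le (integral_polyDx_mul_polyDxt_nonneg hab hcd)
  have h8 := mul_le_mul_of_nonneg_left (integral_polyVal_sq_le hab hcd)
    (show 0 ≤ k / (2 * (b - a)) by positivity)
  have h9 : k / (2 * (b - a)) * ((b - a) ^ 2 * ∫ z, polyDt e z ^ 2 ∂slabMeasure a b)
      = k * (b - a) / 2 * ∫ z, polyDt e z ^ 2 ∂slabMeasure a b := by
    field_simp
  linarith

theorem schemeForm_lipschitz {ε L : ℝ} (a b : ℝ) (hε : 0 < ε) (hL : 0 < L)
    {f : ℝ → ℝ} (hfc : Continuous f) (hf : ∀ x y : ℝ, |f x - f y| ≤ L * |x - y|) :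
    ∃ K : ℝ, ∀ c d e : CoeffSpace M N,
      |schemeForm ε a b hfc c e - schemeForm ε a b hfc d e| ≤ K * ‖c - d‖ * ‖e‖ := by
  set A := tensorBound M N (fun n x => x ^ n) (fun n t => t ^ n)
  set Ax := tensorBound M N derivMonomial (fun n t => t ^ n)
  set At := tensorBound M N (fun n x => x ^ n) derivMonomial
  set Axt := tensorBound M N derivMonomial derivMonomial
  have hA : Continuous A :=
    continuous_tensorBound (fun n => continuous_pow n) (fun n => continuous_pow n)
  have hAx : Continuous Ax :=
    continuous_tensorBound continuous_derivMonomial (fun n => continuous_pow n)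
  have hAt : Continuous At :=
    continuous_tensorBound (fun n => continuous_pow n) continuous_derivMonomial
  have hAxt : Continuous Axt :=
    continuous_tensorBound continuous_derivMonomial continuous_derivMonomial
  refine ⟨∫ z, (At z * At z + ε * (Ax z * Axt z) + L / ε * (A z * At z)) ∂slabMeasure a b,
    fun c d e => ?_⟩
  rw [schemeForm_apply, schemeForm_apply,
    ← integral_sub (integrable_slabMeasure (continuous_schemeIntegrand hfc c e))
      (integrable_slabMeasure (continuous_schemeIntegrand hfc d e)), ← Real.norm_eq_abs,
    mul_assoc, ← MeasureTheory.integral_mul_const]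
  refine norm_integral_le_of_norm_le (integrable_slabMeasure (by fun_prop))
    (Filter.Eventually.of_forall fun z => ?_)
  have h6 : schemeIntegrand ε f c e z - schemeIntegrand ε f d e z
      = polyDt (c - d) z * polyDt e z + ε * (polyDx (c - d) z * polyDxt e z)
        + 1 / ε * ((f (polyVal c z) - f (polyVal d z)) * polyDt e z) := by
    have ht : polyDt (c - d) z = polyDt c z - polyDt d z := tensorSum_sub c d z
    have hx : polyDx (c - d) z = polyDx c z - polyDx d z := tensorSum_sub c d z
    rw [schemeIntegrand, schemeIntegrand, ht, hx]
    ring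
  have hfv : |f (polyVal c z) - f (polyVal d z)| ≤ L * (‖c - d‖ * A z) := by
    refine (hf _ _).trans ?_
    rw [← tensorSum_sub]
    gcongr
    exact abs_tensorSum_le _ _
  have hA0 : 0 ≤ A z := tensorBound_nonneg z
  have hAx0 : 0 ≤ Ax z := tensorBound_nonneg z
  have hAt0 : 0 ≤ At z := tensorBound_nonneg z
  have b1 : |polyDt (c - d) z| ≤ ‖c - d‖ * At z := abs_tensorSum_le _ _
  have b2 : |polyDt e z| ≤ ‖e‖ * At z := abs_tensorSum_le _ _
  have b3 : |polyDx (c - d) z| ≤ ‖c - d‖ * Ax z := abs_tensorSum_le _ _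
  have b4 : |polyDxt e z| ≤ ‖e‖ * Axt z := abs_tensorSum_le _ _
  rw [h6, Real.norm_eq_abs]
  calc _ ≤ |polyDt (c - d) z| * |polyDt e z| + ε * (|polyDx (c - d) z| * |polyDxt e z|)
        + 1 / ε * (|f (polyVal c z) - f (polyVal d z)| * |polyDt e z|) := by
        refine (abs_add_le _ _).trans (add_le_add ((abs_add_le _ _).trans_eq ?_) (le_of_eq ?_))
        · rw [abs_mul, abs_mul, abs_mul, abs_of_pos hε]
        · rw [abs_mul, abs_mul, abs_of_pos (one_div_pos.2 hε)]
    _ ≤ (‖c - d‖ * At z) * (‖e‖ * At z) + ε * ((‖c - d‖ * Ax z) * (‖e‖ * Axt z))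
        + 1 / ε * ((L * (‖c - d‖ * A z)) * (‖e‖ * At z)) := by gcongr
    _ = _ := by ring

theorem existsUnique_schemeForm_eq_zero {ε L a b : ℝ} (hε : 0 < ε) (hL : 0 < L) (hab : a < b)
    (hτ : b - a < ε / L) {f : ℝ → ℝ} (hfc : Continuous f)
    (hf : ∀ x y : ℝ, |f x - f y| ≤ L * |x - y|) (c₀ : CoeffSpace M N) :
    ∃! c : CoeffSpace M N, c - c₀ ∈ homogeneousTrial M N a ∧
      ∀ d ∈ homogeneousTrial M N a, schemeForm ε a b hfc c d = 0 := by
  have hk : 0 < 1 - L / ε * (b - a) := by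
    rw [lt_div_iff₀ hL] at hτ
    rw [sub_pos, div_mul_eq_mul_div, div_lt_one hε]
    linarith
  obtain ⟨m, hm, hmq⟩ := exists_pos_mul_norm_sq_le (E := homogeneousTrial M N a)
    (q := fun c => ∫ z, polyDt (c : CoeffSpace M N) z ^ 2 ∂slabMeasure a b)
    ((continuous_integral_polyDt_sq a b).comp continuous_subtype_val)
    (fun r c => by
      simp only [Submodule.coe_smul, tensorSum_smul, mul_pow, MeasureTheory.integral_const_mul])
    (fun c hc => by
      by_contra hle
      exact hc (Subtype.ext (eq_zero_of_integral_polyDt_sq_le hab c.2 (not_lt.1 hle))))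
  obtain ⟨K, hK⟩ := schemeForm_lipschitz (M := M) (N := N) a b hε hL hfc hf
  obtain ⟨u, hu⟩ := exists_eq_zero_of_strongly_monotone (H := homogeneousTrial M N a)
    (fun u => (schemeForm ε a b hfc (c₀ + (u : CoeffSpace M N))).comp (homogeneousTrial M N a).subtype)
    (mul_pos hk hm) (K := K)
    (fun u v => by
      have huv : (c₀ + u : CoeffSpace M N) - (c₀ + v) = ((u - v : homogeneousTrial M N a) : _) := by
        rw [Submodule.coe_sub]; abel
      have h := schemeForm_monotone hε hL hab hfc hf
        (c := c₀ + (u : CoeffSpace M N)) (d := c₀ + (v : CoeffSpace M N)) (huv ▸ (u - v).2)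
      rw [huv] at h
      refine le_trans ?_ h
      rw [mul_assoc]
      exact mul_le_mul_of_nonneg_left (hmq (u - v)) hk.le)
    (fun u v w => by
      have h := hK (c₀ + u) (c₀ + v) w
      rwa [add_sub_add_left_eq_sub] at h)
  refine ⟨c₀ + u, ⟨by simp, fun d hd => LinearMap.congr_fun hu ⟨d, hd⟩⟩, fun c hc => ?_⟩
  have hmem : c - (c₀ + u) ∈ homogeneousTrial M N a := by
    rw [← sub_sub]
    exact Submodule.sub_mem _ hc.1 u.2
  have h := schemeForm_monotone hε hL hab hfc hf hmem
  have hu' : schemeForm ε a b hfc (c₀ + (u : CoeffSpace M N)) (c - (c₀ + u)) = 0 :=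
    LinearMap.congr_fun hu ⟨_, hmem⟩
  rw [hc.2 _ hmem, hu', sub_zero] at h
  exact sub_eq_zero.1 (eq_zero_of_integral_polyDt_sq_le hab hmem
    (nonpos_of_mul_nonpos_right h hk))

end PolyVal

section Scheme

variable {M N : ℕ}

theorem ptd_polyVal (c : CoeffSpace M N) (x t : ℝ) :
    ptd (fun x t => polyVal c (x, t)) x t = polyDt c (x, t) :=
  (hasDerivAt_polyVal_snd c x t).deriv

theorem pxd_polyVal (c : CoeffSpace M N) (x t : ℝ) :
    pxd (fun x t => polyVal c (x, t)) x t = polyDx c (x, t) :=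
  (hasDerivAt_polyVal_fst c x t).deriv

theorem pxd_polyDt (c : CoeffSpace M N) (x t : ℝ) :
    pxd (fun x t => polyDt c (x, t)) x t = polyDxt c (x, t) :=
  (hasDerivAt_polyDt_fst c x t).deriv

theorem integral_scheme_eq_schemeForm {a b : ℝ} (hab : a ≤ b) (ε : ℝ) {f : ℝ → ℝ}
    (hf : Continuous f) (c d : CoeffSpace M N) :
    (∫ t in a..b, ∫ x in (-1 : ℝ)..1,
      (ptd (fun x t => polyVal c (x, t)) x t * polyDt d (x, t) +
        ε * pxd (fun x t => polyVal c (x, t)) x t * pxd (fun x t => polyDt d (x, t)) x t +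
        (1 / ε) * f (polyVal c (x, t)) * polyDt d (x, t))) = schemeForm ε a b hf c d := by
  rw [schemeForm_apply, integral_slabMeasure_symm hab (continuous_schemeIntegrand hf c d)]
  simp only [ptd_polyVal, pxd_polyVal, pxd_polyDt, schemeIntegrand]

theorem polyDt_succ (d : CoeffSpace M (N + 1)) (x t : ℝ) :
    polyDt d (x, t) = ∑ i : Fin (M + 1), ∑ j : Fin (N + 1),
      (d (i, j.succ) * (j + 1)) * x ^ (i : ℕ) * t ^ (j : ℕ) := by
  simp only [tensorSum, Fintype.sum_prod_type, derivMonomial]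
  refine Finset.sum_congr rfl fun i _ => ?_
  rw [Fin.sum_univ_succ]
  simp only [Fin.val_zero, Nat.cast_zero, zero_mul, mul_zero, zero_add, Fin.val_succ,
    Nat.add_sub_cancel, Nat.cast_add, Nat.cast_one]
  exact Finset.sum_congr rfl fun j _ => by ring

theorem memW_polyDt {a : ℝ} {d : CoeffSpace M (N + 1)} (hd : d ∈ homogeneousTrial M (N + 1) a) :
    MemW M (N + 1) fun x t => polyDt d (x, t) := by
  refine ⟨⟨fun i j => d (i, j.succ) * (j + 1), fun x t => polyDt_succ d x t⟩, fun t => ⟨?_, ?_⟩⟩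
  · have h := hasDerivAt_polyVal_snd d (-1) t
    simp only [((mem_homogeneousTrial.1 hd).1 _).1] at h
    exact h.unique (hasDerivAt_const t 0)
  · have h := hasDerivAt_polyVal_snd d 1 t
    simp only [((mem_homogeneousTrial.1 hd).1 _).2] at h
    exact h.unique (hasDerivAt_const t 0)

theorem exists_eq_polyDt_of_memW (a : ℝ) {w : ℝ → ℝ → ℝ} (hw : MemW M (N + 1) w) :
    ∃ d ∈ homogeneousTrial M (N + 1) a, w = fun x t => polyDt d (x, t) := by
  obtain ⟨⟨c, hc⟩, hbd⟩ := hw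
  change Fin (M + 1) → Fin (N + 1) → ℝ at c
  set d : CoeffSpace M (N + 1) := WithLp.toLp 2 fun p =>
    Fin.cases (motive := fun _ => ℝ) (-∑ j, c p.1 j / (j + 1) * a ^ ((j : ℕ) + 1))
      (fun j => c p.1 j / (j + 1)) p.2 with hd
  have hwd : w = fun x t => polyDt d (x, t) := by
    ext x t
    rw [hc, polyDt_succ]
    refine Finset.sum_congr rfl fun i _ => Finset.sum_congr rfl fun j _ => ?_
    have : ((j : ℕ) : ℝ) + 1 ≠ 0 := by positivity
    simp only [hd, Fin.cases_succ]
    rw [div_mul_cancel₀ _ this]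
  have hda : ∀ x, polyVal d (x, a) = 0 := by
    intro x
    simp only [tensorSum, Fintype.sum_prod_type]
    refine Finset.sum_eq_zero fun i _ => ?_
    rw [Fin.sum_univ_succ]
    simp only [hd, Fin.cases_zero, Fin.cases_succ, Fin.val_zero, Fin.val_succ, pow_zero, mul_one,
      neg_mul, Finset.sum_mul]
    rw [neg_add_eq_zero]
    exact Finset.sum_congr rfl fun j _ => by ring
  have hconst : ∀ x, (∀ t, w x t = 0) → ∀ t, polyVal d (x, t) = 0 := by
    intro x hx t
    rw [← hda x]
    refine is_const_of_deriv_eq_zero (f := fun t => polyVal d (x, t))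
      (fun s => (hasDerivAt_polyVal_snd d x s).differentiableAt) (fun s => ?_) t a
    rw [(hasDerivAt_polyVal_snd d x s).deriv, ← hx s, hwd]
  exact ⟨d, mem_homogeneousTrial.2 ⟨fun t => ⟨hconst _ (fun s => (hbd s).1) t,
    hconst _ (fun s => (hbd s).2) t⟩, hda⟩, hwd⟩

theorem exists_polyVal_eq_eval (N : ℕ) {u : Polynomial ℝ} (hu : u.natDegree ≤ M) :
    ∃ c : CoeffSpace M N, ∀ x t, polyVal c (x, t) = u.eval x := by
  refine ⟨WithLp.toLp 2 fun p => if p.2 = 0 then u.coeff p.1 else 0, fun x t => ?_⟩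
  rw [Polynomial.eval_eq_sum_range' (Nat.lt_succ_of_le hu), ← Fin.sum_univ_eq_sum_range
    fun i => u.coeff i * x ^ i]
  simp [tensorSum, Fintype.sum_prod_type, ite_mul]

theorem forall_polyVal_eq_of_mem_Icc {c d : CoeffSpace M N} {a : ℝ}
    (h : ∀ x ∈ Set.Icc (-1 : ℝ) 1, polyVal c (x, a) = polyVal d (x, a)) (x : ℝ) :
    polyVal (c - d) (x, a) = 0 := by
  have hexp : ∀ x, polyVal (c - d) (x, a)
      = ∑ i : Fin (M + 1), (∑ j : Fin (N + 1), (c - d) (i, j) * a ^ (j : ℕ)) * x ^ (i : ℕ) := by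
    intro x
    simp only [tensorSum, Fintype.sum_prod_type, Finset.sum_mul]
    exact Finset.sum_congr rfl fun i _ => Finset.sum_congr rfl fun j _ => by ring
  have h0 := coeff_eq_zero_of_infinite
    (c := fun i : Fin (M + 1) => ∑ j : Fin (N + 1), (c - d) (i, j) * a ^ (j : ℕ))
    (Set.Icc_infinite (show (-1 : ℝ) < 1 by norm_num)) fun x hx => by
      rw [← hexp]
      exact (tensorSum_sub c d _).trans (sub_eq_zero.2 (h x hx))
  rw [hexp]
  exact Finset.sum_eq_zero fun i _ => by rw [congrFun h0 i, Pi.zero_apply, zero_mul]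

end Scheme

/-- Existence and uniqueness part of Theorem 2.1: the implicit ESET scheme for
the Allen–Cahn equation has a unique single-step solution when the step size
`τ = b − a` satisfies `τ < ε/L`, `f` being Lipschitz with constant `L`. -/
theorem eset_implicit_step_wellposed (M N : ℕ) (hM : 1 ≤ M) (hN : 1 ≤ N)
    (ε L : ℝ) (hε : 0 < ε) (hL : 0 < L) (a b : ℝ) (hab : a < b)
    (hτ : b - a < ε / L)
    (f : ℝ → ℝ) (hf : ∀ x y : ℝ, |f x - f y| ≤ L * |x - y|)
    (u₀ : Polynomial ℝ) (hu₀deg : u₀.natDegree ≤ M)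
    (hu₀m : u₀.eval (-1 : ℝ) = 0) (hu₀p : u₀.eval (1 : ℝ) = 0) :
    ∃! h : ℝ → ℝ → ℝ, MemV M N h ∧
      (∀ x ∈ Set.Icc (-1 : ℝ) 1, h x a = u₀.eval x) ∧
      ∀ w : ℝ → ℝ → ℝ, MemW M N w →
        (∫ t in a..b, ∫ x in (-1 : ℝ)..1,
          (ptd h x t * w x t + ε * pxd h x t * pxd w x t +
            (1 / ε) * f (h x t) * w x t)) = 0 := by
  obtain ⟨n, rfl⟩ : ∃ n, N = n + 1 := ⟨N - 1, by omega⟩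
  have hfc : Continuous f :=
    (LipschitzWith.of_dist_le_mul (K := ⟨L, hL.le⟩) fun x y => hf x y).continuous
  obtain ⟨c₀, hc₀⟩ := exists_polyVal_eq_eval (n + 1) hu₀deg
  obtain ⟨c, ⟨hc, hcs⟩, huniq⟩ := existsUnique_schemeForm_eq_zero hε hL hab hτ hfc hf c₀
  rw [mem_homogeneousTrial] at hc
  simp only [tensorSum_sub, hc₀, hu₀m, hu₀p, sub_zero, sub_eq_zero] at hc
  refine ⟨fun x t => polyVal c (x, t), ⟨⟨isPolyMN_iff.2 ⟨c, fun _ _ => rfl⟩, hc.1⟩,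
    fun x _ => hc.2 x, fun w hw => ?_⟩, ?_⟩
  · obtain ⟨d, hd, rfl⟩ := exists_eq_polyDt_of_memW a hw
    rw [← hcs d hd]
    exact integral_scheme_eq_schemeForm hab.le ε hfc c d
  · rintro h ⟨⟨hpoly, hbd⟩, hinit, hsol⟩
    obtain ⟨c', hc'⟩ := isPolyMN_iff.1 hpoly
    obtain rfl : h = fun x t => polyVal c' (x, t) := by ext x t; exact hc' x t
    have hmem : c' - c₀ ∈ homogeneousTrial M (n + 1) a := by
      refine mem_homogeneousTrial.2 ⟨fun t => ?_,
        forall_polyVal_eq_of_mem_Icc fun x hx => (hinit x hx).trans (hc₀ x a).symm⟩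
      simp only [tensorSum_sub, hc₀, hu₀m, hu₀p, sub_zero]
      exact hbd t
    rw [huniq c' ⟨hmem, fun d hd => ?_⟩]
    rw [← integral_scheme_eq_schemeForm hab.le ε hfc c' d]
    exact hsol _ (memW_polyDt hd)
end

section
/- Fix integers M ≥ 1, N ≥ 1, reals ε > 0, L > 0 and a < b with τ := b − a, and f : ℝ → ℝ Lipschitz continuous with constant L. Let g, h₀, h₁ ∈ V_{M,N} all have the same value at t = a (g(·,a) = h₀(·,a) = h₁(·,a)), and suppose h₀ solves the linearized step with source f(g) and h₁ solves the linearized step with source f(h₀); that is, for j = 0, 1: ∫_a^b ∫₋₁¹ [∂_t h_j·w + ε ∂_x h_j·∂_x w + (1/ε) f(p_j)·w] dx dt = 0 for every w ∈ W_{M,N−1}, where p₀ = g and p₁ = h₀. Then, with d := h₁ − h₀ and d' := h₀ − g, ∫_a^b ∫₋₁¹ (∂_t d)² dx dt + ε ∫₋₁¹ (∂_x d(x,b))² dx ≤ (L²τ²/ε²) ∫_a^b ∫₋₁¹ (∂_t d')² dx dt. -/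
open MeasureTheory intervalIntegral

/-- Joint continuity allows swapping the order of integration over a rectangle. -/
lemma integral_swap_of_continuous {F : ℝ → ℝ → ℝ} (hF : Continuous fun p : ℝ × ℝ => F p.1 p.2)
    (a b c d : ℝ) :
    (∫ t in a..b, ∫ x in c..d, F x t) = ∫ x in c..d, ∫ t in a..b, F x t := by
  apply MeasureTheory.intervalIntegral_intervalIntegral_swap
  have hc : Continuous fun p : ℝ × ℝ => F p.2 p.1 := hF.comp continuous_swap
  exact (hc.continuousOn.integrableOn_compact
    (isCompact_uIcc.prod isCompact_uIcc)).mono_set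
      (Set.prod_mono Set.uIoc_subset_uIcc Set.uIoc_subset_uIcc)

lemma continuous_integral_of_continuous {F : ℝ → ℝ → ℝ}
    (hF : Continuous fun p : ℝ × ℝ => F p.1 p.2) (c d : ℝ) :
    Continuous fun t => ∫ x in c..d, F x t :=
  intervalIntegral.continuous_parametric_intervalIntegral_of_continuous'
    (f := fun t x => F x t) (hF.comp continuous_swap) c d

lemma double_integral_add {F G : ℝ → ℝ → ℝ}
    (hF : Continuous fun p : ℝ × ℝ => F p.1 p.2) (hG : Continuous fun p : ℝ × ℝ => G p.1 p.2)
    (a b c d : ℝ) :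
    (∫ t in a..b, ∫ x in c..d, (F x t + G x t)) =
      (∫ t in a..b, ∫ x in c..d, F x t) + ∫ t in a..b, ∫ x in c..d, G x t := by
  rw [← intervalIntegral.integral_add
    ((continuous_integral_of_continuous hF c d).intervalIntegrable _ _)
    ((continuous_integral_of_continuous hG c d).intervalIntegrable _ _)]
  congr 1
  ext t
  exact intervalIntegral.integral_add
    ((hF.comp (Continuous.prodMk_left t)).intervalIntegrable _ _)
    ((hG.comp (Continuous.prodMk_left t)).intervalIntegrable _ _)

lemma double_integral_mono {F G : ℝ → ℝ → ℝ}
    (hF : Continuous fun p : ℝ × ℝ => F p.1 p.2) (hG : Continuous fun p : ℝ × ℝ => G p.1 p.2)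
    {a b c d : ℝ} (hab : a ≤ b) (hcd : c ≤ d) (h : ∀ x t, F x t ≤ G x t) :
    (∫ t in a..b, ∫ x in c..d, F x t) ≤ ∫ t in a..b, ∫ x in c..d, G x t :=
  intervalIntegral.integral_mono hab
    ((continuous_integral_of_continuous hF c d).intervalIntegrable _ _)
    ((continuous_integral_of_continuous hG c d).intervalIntegrable _ _) fun t =>
      intervalIntegral.integral_mono hcd
        ((hF.comp (Continuous.prodMk_left t)).intervalIntegrable _ _)
        ((hG.comp (Continuous.prodMk_left t)).intervalIntegrable _ _) fun x => h x t

/-- One-dimensional Poincaré inequality for functions vanishing at the left endpoint. -/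
lemma integral_sq_le_of_eq_zero_left {φ ψ : ℝ → ℝ} {a b : ℝ} (hab : a < b)
    (hφ : ∀ t, HasDerivAt φ (ψ t) t) (hψ : Continuous ψ) (h0 : φ a = 0) :
    (∫ t in a..b, φ t ^ 2) ≤ (b - a) ^ 2 * ∫ t in a..b, ψ t ^ 2 := by
  have hφc : Continuous φ := continuous_iff_continuousAt.2 fun t => (hφ t).continuousAt
  have hτ : 0 < b - a := sub_pos.2 hab
  have pointwise : ∀ t ∈ Set.Icc a b, φ t ^ 2 ≤ (b - a) * ∫ s in a..b, ψ s ^ 2 := by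
    intro t ht
    set m : ℝ := φ t / (b - a) with hm
    have hmφ : φ t = m * (b - a) := by rw [hm]; field_simp
    have htangent : (∫ s in a..t, (2 * m * ψ s - m ^ 2)) ≤ ∫ s in a..t, ψ s ^ 2 :=
      intervalIntegral.integral_mono ht.1
        ((by fun_prop : Continuous fun s => 2 * m * ψ s - m ^ 2).intervalIntegrable _ _)
        ((hψ.pow 2).intervalIntegrable _ _) fun s => by nlinarith [sq_nonneg (ψ s - m)]
    have hvalue : (∫ s in a..t, (2 * m * ψ s - m ^ 2)) = 2 * m * φ t - m ^ 2 * (t - a) := by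
      rw [intervalIntegral.integral_sub ((hψ.const_mul _).intervalIntegrable _ _)
        (continuous_const.intervalIntegrable _ _), intervalIntegral.integral_const_mul,
        intervalIntegral.integral_eq_sub_of_hasDerivAt (fun s _ => hφ s)
          (hψ.intervalIntegrable _ _), h0, intervalIntegral.integral_const, smul_eq_mul]
      ring
    have hext : (∫ s in a..t, ψ s ^ 2) ≤ ∫ s in a..b, ψ s ^ 2 :=
      intervalIntegral.integral_mono_interval le_rfl ht.1 ht.2
        (Filter.Eventually.of_forall fun s => sq_nonneg (ψ s))
        ((hψ.pow 2).intervalIntegrable _ _)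
    have hlower : m ^ 2 * (b - a) ≤ ∫ s in a..b, ψ s ^ 2 := by
      rw [hvalue, hmφ] at htangent
      nlinarith [mul_nonneg (sq_nonneg m) (sub_nonneg.2 ht.2)]
    rw [hmφ]
    nlinarith [mul_le_mul_of_nonneg_left hlower hτ.le]
  calc (∫ t in a..b, φ t ^ 2) ≤ ∫ t in a..b, (b - a) * ∫ s in a..b, ψ s ^ 2 :=
        intervalIntegral.integral_mono_on hab.le ((hφc.pow 2).intervalIntegrable _ _)
          (continuous_const.intervalIntegrable _ _) pointwise
    _ = (b - a) ^ 2 * ∫ t in a..b, ψ t ^ 2 := by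
        rw [intervalIntegral.integral_const, smul_eq_mul]
        ring

lemma IsPolyMN.sub {M N : ℕ} {h k : ℝ → ℝ → ℝ} (hh : IsPolyMN M N h) (hk : IsPolyMN M N k) :
    IsPolyMN M N fun x t => h x t - k x t := by
  obtain ⟨c, hc⟩ := hh
  obtain ⟨e, he⟩ := hk
  refine ⟨fun i j => c i j - e i j, fun x t => ?_⟩
  simp only [hc, he, sub_mul, Finset.sum_sub_distrib]

/-- Jointly continuous first and mixed partial derivatives of `h`. -/
structure HasPartials (h hx ht htx : ℝ → ℝ → ℝ) : Prop where
  continuous : Continuous fun p : ℝ × ℝ => h p.1 p.2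
  continuous_x : Continuous fun p : ℝ × ℝ => hx p.1 p.2
  continuous_t : Continuous fun p : ℝ × ℝ => ht p.1 p.2
  continuous_tx : Continuous fun p : ℝ × ℝ => htx p.1 p.2
  deriv_x : ∀ x t, HasDerivAt (fun y => h y t) (hx x t) x
  deriv_t : ∀ x t, HasDerivAt (fun s => h x s) (ht x t) t
  deriv_tx : ∀ x t, HasDerivAt (fun y => ht y t) (htx x t) x
  deriv_xt : ∀ x t, HasDerivAt (fun s => hx x s) (htx x t) t

lemma HasPartials.sub {h hx ht htx k kx kt ktx : ℝ → ℝ → ℝ}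
    (hh : HasPartials h hx ht htx) (hk : HasPartials k kx kt ktx) :
    HasPartials (fun x t => h x t - k x t) (fun x t => hx x t - kx x t)
      (fun x t => ht x t - kt x t) (fun x t => htx x t - ktx x t) where
  continuous := hh.continuous.sub hk.continuous
  continuous_x := hh.continuous_x.sub hk.continuous_x
  continuous_t := hh.continuous_t.sub hk.continuous_t
  continuous_tx := hh.continuous_tx.sub hk.continuous_tx
  deriv_x x t := (hh.deriv_x x t).sub (hk.deriv_x x t)
  deriv_t x t := (hh.deriv_t x t).sub (hk.deriv_t x t)
  deriv_tx x t := (hh.deriv_tx x t).sub (hk.deriv_tx x t)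
  deriv_xt x t := (hh.deriv_xt x t).sub (hk.deriv_xt x t)

lemma IsPolyMN.exists_hasPartials {M N : ℕ} {h : ℝ → ℝ → ℝ} (hN : 1 ≤ N)
    (hh : IsPolyMN M N h) :
    ∃ hx ht htx, HasPartials h hx ht htx ∧ IsPolyMN M (N - 1) ht := by
  obtain ⟨c, hc⟩ := hh
  obtain ⟨n, rfl⟩ : ∃ n, N = n + 1 := ⟨N - 1, by omega⟩
  obtain rfl : h = fun x t => ∑ i : Fin (M + 1), ∑ j : Fin (n + 1 + 1),
      c i j * x ^ (i : ℕ) * t ^ (j : ℕ) := by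
    ext x t
    exact hc x t
  refine ⟨fun x t => ∑ i : Fin (M + 1), ∑ j : Fin (n + 1 + 1),
      c i j * ((i : ℕ) * x ^ ((i : ℕ) - 1)) * t ^ (j : ℕ),
    fun x t => ∑ i : Fin (M + 1), ∑ j : Fin (n + 1 + 1),
      c i j * x ^ (i : ℕ) * ((j : ℕ) * t ^ ((j : ℕ) - 1)),
    fun x t => ∑ i : Fin (M + 1), ∑ j : Fin (n + 1 + 1),
      c i j * ((i : ℕ) * x ^ ((i : ℕ) - 1)) * ((j : ℕ) * t ^ ((j : ℕ) - 1)), ?_, ?_⟩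
  · constructor
    any_goals fun_prop
    all_goals
      intro x t
      refine HasDerivAt.fun_sum fun i _ => HasDerivAt.fun_sum fun j _ => ?_
    · exact ((hasDerivAt_pow _ _).const_mul _).mul_const _
    · exact (hasDerivAt_pow _ _).const_mul _
    · exact ((hasDerivAt_pow _ _).const_mul _).mul_const _
    · exact (hasDerivAt_pow _ _).const_mul _
  · refine ⟨fun i j => c i j.succ * ((j : ℕ) + 1), fun x t => Finset.sum_congr rfl fun i _ => ?_⟩
    rw [Fin.sum_univ_succ]
    simp only [Fin.val_zero, Nat.cast_zero, zero_mul, mul_zero, zero_add, Fin.val_succ,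
      Nat.add_sub_cancel, Nat.cast_add, Nat.cast_one]
    exact Finset.sum_congr rfl fun j _ => by ring

/-- The energy identity `∬ ∂ₓd ∂ₜ∂ₓd = ½ ∫ (∂ₓd(·,b))²` for `d(·,a) = 0`. -/
lemma HasPartials.integral_mul_mixed {d dx dt dtx : ℝ → ℝ → ℝ} (hd : HasPartials d dx dt dtx)
    {a : ℝ} (h0 : ∀ x, d x a = 0) (b c e : ℝ) :
    (∫ t in a..b, ∫ x in c..e, dx x t * dtx x t) = 1 / 2 * ∫ x in c..e, dx x b ^ 2 := by
  have hdx0 : ∀ x, dx x a = 0 := fun x =>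
    (hd.deriv_x x a).unique (by simpa only [h0] using hasDerivAt_const x (0 : ℝ))
  have hc := hd.continuous_x.mul hd.continuous_tx
  rw [integral_swap_of_continuous (F := fun x t => dx x t * dtx x t) hc,
    ← intervalIntegral.integral_const_mul]
  congr 1
  ext x
  rw [intervalIntegral.integral_eq_sub_of_hasDerivAt (f := fun t => 1 / 2 * dx x t ^ 2)
    (f' := fun t => dx x t * dtx x t)
    (fun t _ => (((hd.deriv_xt x t).pow 2).const_mul (1 / 2)).congr_deriv (by push_cast; ring))
    ((hc.comp (Continuous.prodMk_right x)).intervalIntegrable _ _), hdx0]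
  ring

lemma HasPartials.double_integral_sq_le {d dx dt dtx : ℝ → ℝ → ℝ} (hd : HasPartials d dx dt dtx)
    {a b c e : ℝ} (hab : a < b) (hce : c ≤ e) (h0 : ∀ x, d x a = 0) :
    (∫ t in a..b, ∫ x in c..e, d x t ^ 2) ≤
      (b - a) ^ 2 * ∫ t in a..b, ∫ x in c..e, dt x t ^ 2 := by
  have hd2 := hd.continuous.pow 2
  have hdt2 := hd.continuous_t.pow 2
  rw [integral_swap_of_continuous (F := fun x t => d x t ^ 2) hd2,
    integral_swap_of_continuous (F := fun x t => dt x t ^ 2) hdt2,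
    ← intervalIntegral.integral_const_mul]
  refine intervalIntegral.integral_mono hce
    ((continuous_integral_of_continuous (F := fun t x => d x t ^ 2)
      (hd2.comp continuous_swap) a b).intervalIntegrable _ _)
    (((continuous_integral_of_continuous (F := fun t x => dt x t ^ 2)
      (hdt2.comp continuous_swap) a b).const_mul _).intervalIntegrable _ _) fun x => ?_
  exact integral_sq_le_of_eq_zero_left hab (hd.deriv_t x)
    (hd.continuous_t.comp (Continuous.prodMk_right x)) (h0 x)

/-- The contraction estimate of Section 4.1: one sweep of the semi-implicit
iteration used to solve the implicit ESET scheme contracts with rate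
`L²τ²/ε²`.  Here `h₀` solves the linearized step with frozen source `f(g)`
and `h₁` the one with frozen source `f(h₀)`; `d = h₁ − h₀`, `d' = h₀ − g`. -/
theorem eset_iteration_contraction (M N : ℕ) (hM : 1 ≤ M) (hN : 1 ≤ N)
    (ε L : ℝ) (hε : 0 < ε) (hL : 0 < L) (a b : ℝ) (hab : a < b)
    (f : ℝ → ℝ) (hf : ∀ x y : ℝ, |f x - f y| ≤ L * |x - y|)
    (g h₀ h₁ : ℝ → ℝ → ℝ)
    (hgmem : MemV M N g) (h₀mem : MemV M N h₀) (h₁mem : MemV M N h₁)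
    (hinit : ∀ x : ℝ, g x a = h₀ x a ∧ h₀ x a = h₁ x a)
    (hstep0 : ∀ w : ℝ → ℝ → ℝ, MemW M N w →
      (∫ t in a..b, ∫ x in (-1 : ℝ)..1,
        (ptd h₀ x t * w x t + ε * pxd h₀ x t * pxd w x t +
          (1 / ε) * f (g x t) * w x t)) = 0)
    (hstep1 : ∀ w : ℝ → ℝ → ℝ, MemW M N w →
      (∫ t in a..b, ∫ x in (-1 : ℝ)..1,
        (ptd h₁ x t * w x t + ε * pxd h₁ x t * pxd w x t +
          (1 / ε) * f (h₀ x t) * w x t)) = 0) :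
    (∫ t in a..b, ∫ x in (-1 : ℝ)..1,
        (deriv (fun s => h₁ x s - h₀ x s) t) ^ 2) +
      ε * ∫ x in (-1 : ℝ)..1, (deriv (fun y => h₁ y b - h₀ y b) x) ^ 2 ≤
    (L ^ 2 * (b - a) ^ 2 / ε ^ 2) *
      ∫ t in a..b, ∫ x in (-1 : ℝ)..1,
        (deriv (fun s => h₀ x s - g x s) t) ^ 2 := by
  obtain ⟨gx, gt, gtx, hgp, -⟩ := hgmem.1.exists_hasPartials hN
  obtain ⟨ux, ut, utx, hup, hutpoly⟩ := h₀mem.1.exists_hasPartials hN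
  obtain ⟨vx, vt, vtx, hvp, hvtpoly⟩ := h₁mem.1.exists_hasPartials hN
  have hd := hvp.sub hup
  have he := hup.sub hgp
  have hfc : Continuous f :=
    (LipschitzWith.of_dist_le_mul (K := ⟨L, hL.le⟩) fun x y => hf x y).continuous
  have hboundary : ∀ x, (∀ t, h₀ x t = 0) → (∀ t, h₁ x t = 0) → ∀ t, vt x t - ut x t = 0 :=
    fun x h0 h1 t => (hd.deriv_t x t).unique (by
      simpa only [h0, h1, sub_zero] using hasDerivAt_const t (0 : ℝ))
  have hw : MemW M N fun x t => vt x t - ut x t :=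
    ⟨hvtpoly.sub hutpoly, fun t =>
      ⟨hboundary (-1) (fun s => (h₀mem.2 s).1) (fun s => (h₁mem.2 s).1) t,
        hboundary 1 (fun s => (h₀mem.2 s).2) (fun s => (h₁mem.2 s).2) t⟩⟩
  have eq0 := hstep0 _ hw
  have eq1 := hstep1 _ hw
  simp only [ptd, pxd, (hup.deriv_t _ _).deriv, (hup.deriv_x _ _).deriv, (hvp.deriv_t _ _).deriv,
    (hvp.deriv_x _ _).deriv, (hd.deriv_tx _ _).deriv] at eq0 eq1
  simp only [(hd.deriv_t _ _).deriv, (hd.deriv_x _ _).deriv, (he.deriv_t _ _).deriv]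
  have henergy := hd.integral_mul_mixed (a := a) (fun x => by rw [(hinit x).2, sub_self]) b (-1) 1
  have hpoincare := he.double_integral_sq_le hab (by norm_num : (-1 : ℝ) ≤ 1)
    (fun x => by rw [(hinit x).1, sub_self])
  have cg := hgp.continuous
  have cu := hup.continuous
  have cux := hup.continuous_x
  have cut := hup.continuous_t
  have cutx := hup.continuous_tx
  have cvx := hvp.continuous_x
  have cvt := hvp.continuous_t
  have cvtx := hvp.continuous_tx
  have cfg := hfc.comp cg
  have cfu := hfc.comp cu
  simp only [Function.comp_def] at cfg cfu
  -- Young's inequality, pointwise, with the equation for `h₀` moved to the right-hand side.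
  have young : ∀ x t,
      (1 / 2 * (vt x t - ut x t) ^ 2 + ε * ((vx x t - ux x t) * (vtx x t - utx x t))) +
        (ut x t * (vt x t - ut x t) + ε * ux x t * (vtx x t - utx x t) +
          1 / ε * f (g x t) * (vt x t - ut x t)) ≤
      (vt x t * (vt x t - ut x t) + ε * vx x t * (vtx x t - utx x t) +
          1 / ε * f (h₀ x t) * (vt x t - ut x t)) +
        L ^ 2 / (2 * ε ^ 2) * (h₀ x t - g x t) ^ 2 := by
    intro x t
    have hlip : (f (h₀ x t) - f (g x t)) ^ 2 ≤ L ^ 2 * (h₀ x t - g x t) ^ 2 := by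
      rw [← sq_abs, ← sq_abs (h₀ x t - g x t), ← mul_pow]
      exact pow_le_pow_left₀ (abs_nonneg _) (hf _ _) 2
    have hscaled : (1 / ε * (f (h₀ x t) - f (g x t))) ^ 2 / 2 ≤
        L ^ 2 / (2 * ε ^ 2) * (h₀ x t - g x t) ^ 2 := by
      calc _ = 1 / (2 * ε ^ 2) * (f (h₀ x t) - f (g x t)) ^ 2 := by field_simp
        _ ≤ 1 / (2 * ε ^ 2) * (L ^ 2 * (h₀ x t - g x t) ^ 2) := by gcongr
        _ = _ := by ring
    linarith [sq_nonneg ((vt x t - ut x t) + 1 / ε * (f (h₀ x t) - f (g x t)))]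
  have key := double_integral_mono (by fun_prop) (by fun_prop) hab.le
    (by norm_num : (-1 : ℝ) ≤ 1) young
  rw [double_integral_add (by fun_prop) (by fun_prop),
    double_integral_add (by fun_prop) (by fun_prop),
    double_integral_add
      (F := fun x t => vt x t * (vt x t - ut x t) + ε * vx x t * (vtx x t - utx x t) +
        1 / ε * f (h₀ x t) * (vt x t - ut x t)) (by fun_prop) (by fun_prop), eq0, eq1] at key
  simp only [intervalIntegral.integral_const_mul] at key
  rw [henergy] at key
  have hscaled := mul_le_mul_of_nonneg_left hpoincare (by positivity : 0 ≤ L ^ 2 / ε ^ 2)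
  have hcoef : L ^ 2 / (2 * ε ^ 2) = L ^ 2 / ε ^ 2 / 2 := by field_simp
  rw [hcoef] at key
  rw [mul_div_right_comm]
  linarith
end
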